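/- In the standing setup, assume additionally that diam(X^t) < 1 for all t. Let φ^t : 𝔻 → U^t ∪ {∞} be the normalized Riemann map, and let (L^t)_{t∈[0,1]} be a family of arcs such that 0 is an endpoint of each L^t, L^t ∩ X^t = {0}, and t ↦ L^t is continuous with respect to the Hausdorff metric on compact subsets of ℂ. Then for each t the set cl((φ^t)⁻¹(L^t \ {0})) ∩ ∂𝔻 consists of a single point e^{iα(t)}; the function t ↦ e^{iα(t)} from [0,1] to ∂𝔻 is continuous; and for each t the conformal external ray R^t_{α(t)} lands on 0. -/

import Mathlib

open Set Metric Topology Filter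

/-- The union of the unbounded connected components of the complement of `K`;
for compact `K` this is the (unique) unbounded component of `ℂ \ K`. -/
def unbddComp (K : Set ℂ) : Set ℂ :=
  {z : ℂ | z ∈ Kᶜ ∧ ¬ Bornology.IsBounded (connectedComponentIn Kᶜ z)}

/-- `X^t = ℂ \ U^t`, where `U^t` is the unbounded component of `ℂ \ h^t(Bd X)`. -/
def XtSet (h : ℂ → ℝ → ℂ) (X : Set ℂ) (t : ℝ) : Set ℂ :=
  (unbddComp ((fun z => h z t) '' frontier X))ᶜ

/-- An arc with endpoints `a` and `b`: a homeomorphic image of `[0,1]`. -/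
def IsArcEnds (A : Set ℂ) (a b : ℂ) : Prop :=
  ∃ γ : ℝ → ℂ, ContinuousOn γ (Set.Icc 0 1) ∧ Set.InjOn γ (Set.Icc 0 1) ∧
    γ '' Set.Icc 0 1 = A ∧ γ 0 = a ∧ γ 1 = b

/-- The normalized Riemann map `φ : 𝔻 → U ∪ {∞}`, `φ(0) = ∞`, encoded by its finite
part `f` on the punctured disk: `f` is an injective holomorphic map of `𝔻 \ {0}` onto
`U`, with a simple pole at `0` with positive "derivative": `z·f(z) → c > 0` as `z → 0`. -/
def IsNormalizedRiemannMap (U : Set ℂ) (f : ℂ → ℂ) : Prop :=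
  DifferentiableOn ℂ f (Metric.ball 0 1 \ {0}) ∧
  Set.InjOn f (Metric.ball 0 1 \ {0}) ∧
  f '' (Metric.ball 0 1 \ {0}) = U ∧
  ∃ c : ℝ, 0 < c ∧ Filter.Tendsto (fun z : ℂ => z * f z) (𝓝[≠] 0) (𝓝 (c : ℂ))

/- Proof idea. The reciprocal of a normalized Riemann map is a univalent function on the unit disc
fixing `0`. As the sets `h^t(Bd X)` move continuously, Carathéodory's kernel theorem makes these
functions converge locally uniformly, and so do their inverses. By the length-area method a
preimage of a connected set of points that are `ρ`-close to `0` lies in a sector whose angle tends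
to `0` with `ρ`, at a rate depending only on a lower bound for `|φ^t|` on a smaller disc. Hence the
lift of `L^t` lands at a point `ζ(t)` of the circle, and uniformly so in `t`: up to a small error,
`ζ(t)` is the lift of the point where `L^t` first leaves a small disc, and that lift varies
continuously by kernel convergence. Finally, the radial limit at `ζ(t)` agrees with the limit along
the lifted arc by a form of Lindelöf's theorem, for which boundedness of `φ^t` near the circle and
the omitted value `0` suffice. -/

section Univalent

variable {f g : ℂ → ℂ} {U : Set ℂ} {z : ℂ}

theorem not_eventually_eq_of_injOn (hf : InjOn f U) (hU : U ∈ 𝓝 z) :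
    ¬∀ᶠ w in 𝓝 z, f w = f z := by
  intro h
  obtain ⟨w, ⟨hw, hwU⟩, hwz⟩ :=
    (((h.and hU).filter_mono nhdsWithin_le_nhds).and self_mem_nhdsWithin :
      ∀ᶠ w in 𝓝[≠] z, _).exists
  exact hwz (hf hwU (mem_of_mem_nhds hU) hw)

theorem map_nhds_eq_of_injOn (hU : IsOpen U) (hd : DifferentiableOn ℂ f U) (hf : InjOn f U)
    (hz : z ∈ U) : map f (𝓝 z) = 𝓝 (f z) :=
  have hU' := hU.mem_nhds hz
  le_antisymm (hd.differentiableAt hU').continuousAt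
    ((hd.analyticAt hU').eventually_constant_or_nhds_le_map_nhds.resolve_left
      (not_eventually_eq_of_injOn hf hU'))

theorem isOpen_image_of_injOn (hU : IsOpen U) (hd : DifferentiableOn ℂ f U) (hf : InjOn f U) :
    IsOpen (f '' U) := by
  rw [isOpen_iff_mem_nhds]
  rintro _ ⟨z, hz, rfl⟩
  rw [← map_nhds_eq_of_injOn hU hd hf hz]
  exact image_mem_map (hU.mem_nhds hz)

theorem continuousAt_leftInvOn (hU : IsOpen U) (hd : DifferentiableOn ℂ f U)
    (hg : LeftInvOn g f U) (hz : z ∈ U) : ContinuousAt g (f z) := by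
  rw [ContinuousAt, ← map_nhds_eq_of_injOn hU hd hg.injOn hz, hg hz, tendsto_map'_iff]
  exact tendsto_id.congr' (eventually_of_mem (hU.mem_nhds hz) fun w hw => (hg hw).symm)

theorem differentiableAt_leftInvOn_of_deriv_ne_zero (hU : IsOpen U) (hd : DifferentiableOn ℂ f U)
    (hg : LeftInvOn g f U) (hz : z ∈ U) (h : deriv f z ≠ 0) : DifferentiableAt ℂ g (f z) := by
  refine (HasDerivAt.of_local_left_inverse (continuousAt_leftInvOn hU hd hg hz)
    (f := f) (f' := deriv f z) ?_ h ?_).differentiableAt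
  · rw [hg hz]
    exact (hd.differentiableAt (hU.mem_nhds hz)).hasDerivAt
  · filter_upwards [(isOpen_image_of_injOn hU hd hg.injOn).mem_nhds (mem_image_of_mem f hz)]
    rintro _ ⟨w, hw, rfl⟩
    rw [hg hw]

theorem eventually_deriv_ne_zero_of_injOn (hU : IsOpen U) (hd : DifferentiableOn ℂ f U)
    (hf : InjOn f U) (hz : z ∈ U) : ∀ᶠ w in 𝓝[≠] z, deriv f w ≠ 0 := by
  have hzU := hU.mem_nhds hz
  refine (hd.analyticAt hzU).deriv.eventually_eq_zero_or_eventually_ne_zero.resolve_left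
    fun h0 => ?_
  obtain ⟨r, hr, hball⟩ := Metric.eventually_nhds_iff_ball.1 (h0.and hzU)
  refine not_eventually_eq_of_injOn hf hzU (eventually_of_mem (ball_mem_nhds z hr) fun w hw => ?_)
  exact isOpen_ball.is_const_of_deriv_eq_zero (convex_ball z r).isPreconnected
    (hd.mono fun x hx => (hball x hx).2) (fun x hx => (hball x hx).1) hw (mem_ball_self hr)

/- At a critical point the inverse is continuous and holomorphic nearby, so the singularity is
removable; the chain rule then rules out critical points altogether. -/
theorem differentiableOn_leftInvOn (hU : IsOpen U) (hd : DifferentiableOn ℂ f U)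
    (hg : LeftInvOn g f U) : DifferentiableOn ℂ g (f '' U) := by
  rintro _ ⟨z, hz, rfl⟩
  have hopen : ∀ᶠ w in 𝓝[≠] z, w ∈ U := nhdsWithin_le_nhds (hU.mem_nhds hz)
  have hgood : ∀ᶠ w in 𝓝[≠] z, DifferentiableAt ℂ g (f w) := by
    filter_upwards [hopen, eventually_deriv_ne_zero_of_injOn hU hd hg.injOn hz] with w hwU hw
    exact differentiableAt_leftInvOn_of_deriv_ne_zero hU hd hg hwU hw
  have hpunct : ∀ᶠ y in 𝓝[≠] f z, DifferentiableAt ℂ g y := by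
    rw [eventually_nhdsWithin_iff, ← map_nhds_eq_of_injOn hU hd hg.injOn hz, eventually_map]
    filter_upwards [eventually_nhdsWithin_iff.1 hgood] with w hw hne
    exact hw fun h => hne (congrArg f h)
  exact (Complex.analyticAt_of_differentiable_on_punctured_nhds_of_continuousAt hpunct
    (continuousAt_leftInvOn hU hd hg hz)).differentiableAt.differentiableWithinAt

theorem deriv_ne_zero_of_injOn (hU : IsOpen U) (hd : DifferentiableOn ℂ f U) (hf : InjOn f U)
    (hz : z ∈ U) : deriv f z ≠ 0 := by
  intro h0
  have hg := hf.leftInvOn_invFunOn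
  have hgd := ((differentiableOn_leftInvOn hU hd hg).differentiableAt
    ((isOpen_image_of_injOn hU hd hf).mem_nhds (mem_image_of_mem f hz))).hasDerivAt
  have hcomp := hgd.comp z (hd.differentiableAt (hU.mem_nhds hz)).hasDerivAt
  have hid : Function.invFunOn f U ∘ f =ᶠ[𝓝 z] id :=
    eventually_of_mem (hU.mem_nhds hz) fun w hw => hg hw
  simpa [h0] using (hcomp.congr_of_eventuallyEq hid.symm).unique (hasDerivAt_id z)

end Univalent

theorem isSimplyConnected_ball {E : Type*} [NormedAddCommGroup E] [NormedSpace ℝ E] {x : E} {r : ℝ}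
    (hr : 0 < r) : IsSimplyConnected (ball x r) :=
  have := (convex_ball x r).contractibleSpace ⟨x, mem_ball_self hr⟩
  SimplyConnectedSpace.ofContractible _

theorem exists_differentiableOn_log {f : ℂ → ℂ} {U : Set ℂ} (hUc : IsSimplyConnected U)
    (hUo : IsOpen U) (hd : DifferentiableOn ℂ f U) (h0 : ∀ z ∈ U, f z ≠ 0) {z₀ w₀ : ℂ}
    (hz₀ : z₀ ∈ U) (hw₀ : Complex.exp w₀ = f z₀) :
    ∃ G : ℂ → ℂ, DifferentiableOn ℂ G U ∧ G z₀ = w₀ ∧ ∀ z ∈ U, Complex.exp (G z) = f z := by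
  obtain ⟨G, hGc, hG⟩ := Complex.exists_continuousOn_eqOn_exp_comp hUc hUo hd.continuousOn
    (by rintro ⟨z, hz, hz0⟩; exact h0 z hz hz0)
  have hGd : DifferentiableOn ℂ G U := fun z hz => by
    have hzU := hUo.mem_nhds hz
    have hexp := Complex.hasStrictDerivAt_exp (G z)
    have hinv := (hexp.to_localInverse (Complex.exp_ne_zero _)).hasDerivAt
    refine (((hinv.comp_of_eq z (hd.differentiableAt hzU).hasDerivAt
      (hG hz)).congr_of_eventuallyEq ?_).differentiableAt).differentiableWithinAt
    have hleft := (hexp.hasStrictFDerivAt_equiv (Complex.exp_ne_zero _)).eventually_left_inverse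
    filter_upwards [hzU, (hGc.continuousAt hzU).eventually hleft] with w hw hinvw
    rw [Function.comp_apply, ← hG hw]
    exact hinvw.symm
  refine ⟨fun z => G z - G z₀ + w₀, (hGd.sub_const _).add_const _, by ring, fun z hz => ?_⟩
  rw [Complex.exp_add, Complex.exp_sub, hw₀, show Complex.exp (G z) = f z from hG hz,
    show Complex.exp (G z₀) = f z₀ from hG hz₀, div_mul_cancel₀ _ (h0 z₀ hz₀)]

section NormalFamilies

variable {ι : Type*} {F : ι → ℂ → ℂ} {f : ℂ → ℂ} {U : Set ℂ}

theorem eventually_dist_le_of_eventually_bounded {l : Filter ι}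
    (hd : ∀ᶠ i in l, DifferentiableOn ℂ (F i) U) {z : ℂ} {R B : ℝ} (hR : 0 < R)
    (hball : ball z R ⊆ U) (hB : ∀ᶠ i in l, ∀ w ∈ ball z R, ‖F i w‖ ≤ B) :
    ∀ᶠ i in l, ∀ w ∈ ball z R, dist (F i w) (F i z) ≤ 2 * B / R * dist w z := by
  filter_upwards [hd, hB] with i hdi hBi w hw
  refine Complex.dist_le_div_mul_dist_of_mapsTo_ball (hdi.mono hball) (fun x hx => ?_) hw
  rw [mem_closedBall, dist_eq_norm]
  linarith [norm_sub_le (F i x) (F i z), hBi x hx, hBi z (mem_ball_self hR)]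

theorem exists_tendsto_of_eventually_norm_le {E : Type*} [NormedAddCommGroup E] [ProperSpace E]
    (l : Ultrafilter ι) {u : ι → E} {B : ℝ} (hB : ∀ᶠ i in l, ‖u i‖ ≤ B) :
    ∃ x, Tendsto u l (𝓝 x) := by
  obtain ⟨x, -, hx⟩ := (isCompact_closedBall (0 : E) B).ultrafilter_le_nhds (l.map u)
    (le_principal_iff.2 <| hB.mono fun i hi => mem_closedBall_zero_iff.2 hi)
  exact ⟨x, hx⟩

/- **Montel's theorem**: along an ultrafilter a locally bounded family converges pointwise, and the
uniform Lipschitz bound from the Schwarz lemma makes the convergence locally uniform. -/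
theorem exists_tendstoLocallyUniformlyOn_of_locallyBounded (l : Ultrafilter ι) (hU : IsOpen U)
    (hd : ∀ᶠ i in l, DifferentiableOn ℂ (F i) U)
    (hb : ∀ K ⊆ U, IsCompact K → ∃ B : ℝ, ∀ᶠ i in l, ∀ z ∈ K, ‖F i z‖ ≤ B) :
    ∃ f : ℂ → ℂ, TendstoLocallyUniformlyOn F f l U := by
  have hpt : ∀ z ∈ U, ∃ w, Tendsto (fun i => F i z) l (𝓝 w) := fun z hz => by
    obtain ⟨B, hB⟩ := hb {z} (singleton_subset_iff.2 hz) isCompact_singleton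
    exact exists_tendsto_of_eventually_norm_le l (hB.mono fun i hi => hi z rfl)
  choose! f hf using hpt
  refine ⟨f, Metric.tendstoLocallyUniformlyOn_iff.2 fun ε hε z hz => ?_⟩
  obtain ⟨R, hR, hRU⟩ := nhds_basis_closedBall.mem_iff.1 (hU.mem_nhds hz)
  obtain ⟨B, hB⟩ := hb _ hRU (isCompact_closedBall z R)
  have hRU' := ball_subset_closedBall.trans hRU
  have hlip := eventually_dist_le_of_eventually_bounded hd hR hRU'
    (hB.mono fun i hi w hw => hi w (ball_subset_closedBall hw))
  have hflip : ∀ w ∈ ball z R, dist (f w) (f z) ≤ 2 * B / R * dist w z := fun w hw =>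
    le_of_tendsto ((hf w (hRU' hw)).dist (hf z hz)) (hlip.mono fun i hi => hi w hw)
  have hsmall : ∀ᶠ w in 𝓝 z, w ∈ ball z R ∧ 2 * B / R * dist w z < ε / 3 := by
    have hcont : Tendsto (fun w => 2 * B / R * dist w z) (𝓝 z) (𝓝 (2 * B / R * dist z z)) :=
      (continuous_const.mul (continuous_id.dist continuous_const)).tendsto z
    exact (eventually_mem_set.2 (ball_mem_nhds z hR)).and
      (hcont.eventually_lt_const (by rw [dist_self, mul_zero]; positivity))
  refine ⟨{w | w ∈ ball z R ∧ 2 * B / R * dist w z < ε / 3}, nhdsWithin_le_nhds hsmall, ?_⟩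
  filter_upwards [hlip, Metric.tendsto_nhds.1 (hf z hz) (ε / 3) (by positivity)]
    with i hi hiz w ⟨hwR, hw⟩
  calc dist (f w) (F i w) ≤ dist (f w) (f z) + dist (f z) (F i z) + dist (F i z) (F i w) :=
        dist_triangle4 _ _ _ _
    _ < ε := by
      rw [dist_comm (f z), dist_comm (F i z) (F i w)]
      linarith [hi w hwR, hflip w hwR]

theorem exists_closedBall_sphere_ne {z w : ℂ} (hU : IsOpen U) (hd : DifferentiableOn ℂ f U)
    (hz : z ∈ U) (hne : ¬∀ᶠ x in 𝓝 z, f x = w) :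
    ∃ s > 0, closedBall z s ⊆ U ∧ ∀ x ∈ sphere z s, f x ≠ w := by
  have hzU := hU.mem_nhds hz
  have hev := (((hd.analyticAt hzU).sub analyticAt_const).eventually_eq_zero_or_eventually_ne_zero
    |>.resolve_left fun h => hne (h.mono fun x hx => sub_eq_zero.1 hx))
  obtain ⟨r, hr, hball⟩ := Metric.eventually_nhds_iff_ball.1
    ((eventually_nhdsWithin_iff.1 hev).and hzU)
  have hsub : closedBall z (r / 2) ⊆ ball z r := closedBall_subset_ball (half_lt_self hr)
  refine ⟨r / 2, half_pos hr, fun x hx => (hball x (hsub hx)).2, fun x hx hxw => ?_⟩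
  exact (hball x (hsub (sphere_subset_closedBall hx))).1
    (ne_of_mem_sphere hx (half_pos hr).ne') (sub_eq_zero.2 hxw)

theorem ball_subset_image_of_forall_sphere_le {z : ℂ} {s m : ℝ} (hUc : IsPreconnected U)
    (hU : IsOpen U) (hd : DifferentiableOn ℂ f U) (hs : 0 < s) (hm : 0 < m)
    (hsU : closedBall z s ⊆ U) (hsphere : ∀ y ∈ sphere z s, m ≤ ‖f y - f z‖) :
    ball (f z) (m / 2) ⊆ f '' U := by
  have hnonconst : ∃ᶠ y in 𝓝 z, f y ≠ f z := fun h => by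
    obtain ⟨x, hx⟩ := NormedSpace.sphere_nonempty (x := z).2 hs.le
    have hxz : f x = f z := (hd.analyticOnNhd hU).eqOn_of_preconnected_of_eventuallyEq
      analyticOnNhd_const hUc (hsU (mem_closedBall_self hs.le)) (h.mono fun y => not_not.1)
      (hsU (sphere_subset_closedBall hx))
    exact hm.not_ge ((hsphere x hx).trans_eq (by rw [hxz, sub_self, norm_zero]))
  exact (DiffContOnCl.ball_subset_image_closedBall
    (hd.mono (by rwa [closure_ball z hs.ne'])).diffContOnCl hs hsphere hnonconst).trans
    (image_mono hsU)

theorem eqOn_const_of_frequently_notMem_image {l : Filter ι} (hU : IsOpen U)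
    (hUc : IsPreconnected U) (hd : ∀ᶠ i in l, DifferentiableOn ℂ (F i) U)
    (hF : TendstoLocallyUniformlyOn F f l U) {w : ι → ℂ} {z w₀ : ℂ} (hw : Tendsto w l (𝓝 w₀))
    (homit : ∃ᶠ i in l, w i ∉ F i '' U) (hz : z ∈ U) (hfz : f z = w₀) :
    EqOn f (fun _ => w₀) U := by
  have : l.NeBot := (frequently_iff_neBot.1 homit).mono inf_le_left
  have hfd := hF.differentiableOn hd hU
  by_contra hcon
  obtain ⟨s, hs, hsU, hsne⟩ := exists_closedBall_sphere_ne hU hfd hz fun h => hcon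
    ((hfd.analyticOnNhd hU).eqOn_of_preconnected_of_eventuallyEq analyticOnNhd_const hUc hz h)
  obtain ⟨x, hx, hmin⟩ := (isCompact_sphere z s).exists_isMinOn
    (NormedSpace.sphere_nonempty.2 hs.le)
    ((hfd.continuousOn.mono (sphere_subset_closedBall.trans hsU)).sub continuousOn_const).norm
  set m := ‖f x - w₀‖
  have hm : 0 < m := norm_pos_iff.2 (sub_ne_zero.2 (hsne x hx))
  have hunif := Metric.tendstoUniformlyOn_iff.1 ((tendstoLocallyUniformlyOn_iff_forall_isCompact
    hU).1 hF _ hsU (isCompact_closedBall z s)) (m / 8) (by positivity)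
  obtain ⟨i, hi, hdi, hui, hwi⟩ := (homit.and_eventually
    (hd.and (hunif.and (Metric.tendsto_nhds.1 hw (m / 8) (by positivity))))).exists
  have hzi := hui z (mem_closedBall_self hs.le)
  rw [hfz] at hzi
  have hfar : ∀ y ∈ sphere z s, m / 2 ≤ ‖F i y - F i z‖ := fun y hy => by
    have hmy : m ≤ dist (f y) w₀ := (hmin hy).trans_eq (dist_eq_norm _ _).symm
    rw [← dist_eq_norm]
    linarith [dist_triangle4 (f y) (F i y) (F i z) w₀, hui y (sphere_subset_closedBall hy),
      dist_comm w₀ (F i z)]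
  refine hi (ball_subset_image_of_forall_sphere_le hUc hU hdi hs (half_pos hm) hsU hfar
    (mem_ball.2 ?_))
  linarith [dist_triangle (w i) w₀ (F i z)]

end NormalFamilies

theorem exp_neg_mul_norm_le_norm_of_ne_zero {f : ℂ → ℂ} {M : ℝ} (hM : 1 < M)
    (hd : DifferentiableOn ℂ f (ball 0 1)) (h0 : ∀ z ∈ ball (0 : ℂ) 1, f z ≠ 0)
    (hb : ∀ z ∈ ball (0 : ℂ) 1, ‖f z‖ ≤ M * ‖f 0‖) {z : ℂ} (hz : z ∈ ball (0 : ℂ) 1) :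
    Real.exp (-(2 * Real.log M * ‖z‖ / (1 - ‖z‖))) * ‖f 0‖ ≤ ‖f z‖ := by
  have hf0 := h0 0 (mem_ball_self one_pos)
  obtain ⟨G, hGd, hG0, hG⟩ := exists_differentiableOn_log (isSimplyConnected_ball one_pos)
    isOpen_ball (hd.div_const (f 0)) (fun z hz => div_ne_zero (h0 z hz) hf0)
    (mem_ball_self one_pos) (w₀ := 0) (by rw [Complex.exp_zero, div_self hf0])
  have hnorm : ∀ z ∈ ball (0 : ℂ) 1, ‖f z‖ = Real.exp (G z).re * ‖f 0‖ := fun z hz => by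
    rw [← Complex.norm_exp, hG z hz, norm_div, div_mul_cancel₀ _ (norm_ne_zero_iff.2 hf0)]
  have hre : MapsTo G (ball 0 1) {w | w.re ≤ Real.log M} := fun z hz => by
    have := hb z hz
    rw [hnorm z hz, mul_le_mul_iff_left₀ (norm_pos_iff.2 hf0)] at this
    exact (Real.le_log_iff_exp_le (one_pos.trans hM)).2 this
  have hGz := Complex.borelCaratheodory_zero (Real.log_pos hM) hGd hre one_pos hz hG0
  rw [hnorm z hz]
  gcongr
  exact (abs_le.1 ((Complex.abs_re_le_norm _).trans hGz)).1

section Growth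

variable {ψ S : ℂ → ℂ} {a z : ℂ}

theorem one_le_norm_of_notMem_image (hball : ball 0 1 ⊆ ψ '' ball 0 1) (ha : a ∉ ψ '' ball 0 1) :
    1 ≤ ‖a‖ :=
  not_lt.1 fun h => ha (hball (mem_ball_zero_iff.2 h))

theorem exists_sqrt_one_sub_div (hd : DifferentiableOn ℂ ψ (ball 0 1)) (h0 : ψ 0 = 0)
    (ha : a ∉ ψ '' ball 0 1) :
    ∃ S : ℂ → ℂ, DifferentiableOn ℂ S (ball 0 1) ∧ S 0 = 1 ∧
      ∀ z ∈ ball (0 : ℂ) 1, ψ z = a * (1 - S z ^ 2) := by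
  have ha0 : a ≠ 0 := by rintro rfl; exact ha ⟨0, mem_ball_self one_pos, h0⟩
  obtain ⟨G, hGd, hG0, hG⟩ := exists_differentiableOn_log (f := fun z => 1 - ψ z / a)
    (isSimplyConnected_ball one_pos) isOpen_ball (hd.div_const a |>.const_sub 1)
    (fun z hz h => ha ⟨z, hz, ((div_eq_one_iff_eq ha0).1 (sub_eq_zero.1 h).symm)⟩)
    (mem_ball_self one_pos) (w₀ := 0) (by simp [h0])
  refine ⟨fun z => Complex.exp (G z / 2), (hGd.div_const 2).cexp, by simp [hG0], fun z hz => ?_⟩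
  rw [← Complex.exp_nat_mul, Nat.cast_ofNat, mul_div_cancel₀ _ two_ne_zero, hG z hz,
    sub_sub_cancel, mul_div_cancel₀ _ ha0]

/- Where `‖ψ‖ < 1` the square of `S` has positive real part, so `S` cannot cross the imaginary
axis. -/
theorem re_pos_of_sq_eq_one_sub_div (hd : DifferentiableOn ℂ ψ (ball 0 1))
    (hi : InjOn ψ (ball 0 1)) (h0 : ψ 0 = 0) (hball : ball 0 1 ⊆ ψ '' ball 0 1)
    (ha : a ∉ ψ '' ball 0 1) (hSc : ContinuousOn S (ball 0 1)) (hS0 : S 0 = 1)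
    (hS : ∀ z ∈ ball (0 : ℂ) 1, ψ z = a * (1 - S z ^ 2)) (hz : z ∈ ball (0 : ℂ) 1)
    (hψz : ‖ψ z‖ < 1) : 0 < (S z).re := by
  have ha1 := one_le_norm_of_notMem_image hball ha
  have hg := hi.leftInvOn_invFunOn
  set g := Function.invFunOn ψ (ball 0 1)
  have hgc : ContinuousOn g (ball 0 1) :=
    (differentiableOn_leftInvOn isOpen_ball hd hg).continuousOn.mono hball
  have hpre : IsPreconnected (g '' ball 0 1) := (convex_ball 0 1).isPreconnected.image g hgc
  have hsub : g '' ball 0 1 ⊆ ball 0 1 := by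
    rintro _ ⟨w, hw, rfl⟩
    obtain ⟨x, hx, rfl⟩ := hball hw
    rwa [hg hx]
  have hmem : ∀ x ∈ ball (0 : ℂ) 1, ‖ψ x‖ < 1 → x ∈ g '' ball 0 1 := fun x hx hψx =>
    ⟨ψ x, mem_ball_zero_iff.2 hψx, hg hx⟩
  by_contra! hneg
  obtain ⟨_, ⟨w, hw, rfl⟩, hre⟩ := hpre.intermediate_value (hmem z hz hψz)
    (hmem 0 (mem_ball_self one_pos) (by simp [h0]))
    (Complex.continuous_re.comp_continuousOn (hSc.mono hsub))
    (show (0 : ℝ) ∈ Icc (S z).re (S 0).re from ⟨hneg, by simp [hS0]⟩)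
  obtain ⟨x, hx, rfl⟩ := hball hw
  rw [hg hx] at hre
  have hlt : ‖1 - S x ^ 2‖ < 1 := by
    rw [mem_ball_zero_iff, hS x hx, norm_mul] at hw
    nlinarith [norm_nonneg (1 - S x ^ 2)]
  have := (Complex.re_le_norm _).trans_lt hlt
  simp only [Complex.sub_re, Complex.one_re, sq, Complex.mul_re,
    show (S x).re = 0 from hre] at this
  nlinarith

theorem inv_le_norm_one_add_sqrt (hd : DifferentiableOn ℂ ψ (ball 0 1))
    (hi : InjOn ψ (ball 0 1)) (h0 : ψ 0 = 0) (hball : ball 0 1 ⊆ ψ '' ball 0 1)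
    (ha : a ∉ ψ '' ball 0 1) (hSc : ContinuousOn S (ball 0 1)) (hS0 : S 0 = 1)
    (hS : ∀ z ∈ ball (0 : ℂ) 1, ψ z = a * (1 - S z ^ 2)) (hz : z ∈ ball (0 : ℂ) 1) :
    (3 * ‖a‖)⁻¹ ≤ ‖1 + S z‖ := by
  have ha1 := one_le_norm_of_notMem_image hball ha
  by_contra! hlt
  have hmul : ‖1 + S z‖ * (3 * ‖a‖) < 1 := by
    rwa [← one_div, lt_div_iff₀ (by positivity)] at hlt
  have hthird : ‖1 + S z‖ < 1 / 3 := by nlinarith [norm_nonneg (1 + S z)]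
  have hψz : ‖ψ z‖ < 1 := by
    have hfac : ψ z = a * (1 + S z) * (2 - (1 + S z)) := by rw [hS z hz]; ring
    have htwo : ‖2 - (1 + S z)‖ ≤ 2 + ‖1 + S z‖ := (norm_sub_le _ _).trans (by simp)
    rw [hfac, norm_mul, norm_mul]
    nlinarith [norm_nonneg (1 + S z), mul_nonneg (norm_nonneg a) (norm_nonneg (1 + S z))]
  have hpos := re_pos_of_sq_eq_one_sub_div hd hi h0 hball ha hSc hS0 hS hz hψz
  have hre := (Complex.re_le_norm (1 + S z)).trans_lt hthird
  rw [Complex.add_re, Complex.one_re] at hre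
  linarith

theorem norm_one_add_sqrt_le (hd : DifferentiableOn ℂ ψ (ball 0 1))
    (hi : InjOn ψ (ball 0 1)) (h0 : ψ 0 = 0) (hball : ball 0 1 ⊆ ψ '' ball 0 1)
    (ha : a ∉ ψ '' ball 0 1) (hSd : DifferentiableOn ℂ S (ball 0 1)) (hS0 : S 0 = 1)
    (hS : ∀ z ∈ ball (0 : ℂ) 1, ψ z = a * (1 - S z ^ 2)) (hz : z ∈ ball (0 : ℂ) 1) :
    ‖1 + S z‖ ≤ 2 * Real.exp (2 * Real.log (6 * ‖a‖) * ‖z‖ / (1 - ‖z‖)) := by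
  have ha1 := one_le_norm_of_notMem_image hball ha
  have hlow : ∀ z ∈ ball (0 : ℂ) 1, (3 * ‖a‖)⁻¹ ≤ ‖1 + S z‖ := fun z hz =>
    inv_le_norm_one_add_sqrt hd hi h0 hball ha hSd.continuousOn hS0 hS hz
  have hne : ∀ z ∈ ball (0 : ℂ) 1, 1 + S z ≠ 0 := fun z hz =>
    norm_pos_iff.1 ((by positivity : 0 < (3 * ‖a‖)⁻¹).trans_le (hlow z hz))
  have hnorm0 : ‖(1 + S 0)⁻¹‖ = 1 / 2 := by norm_num [hS0]
  have hlower := exp_neg_mul_norm_le_norm_of_ne_zero (f := fun z => (1 + S z)⁻¹) (M := 6 * ‖a‖)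
    (by linarith) ((hSd.const_add 1).inv hne) (fun z hz => inv_ne_zero (hne z hz))
    (fun z hz => by
      rw [hnorm0, norm_inv, show 6 * ‖a‖ * (1 / 2) = 3 * ‖a‖ by ring]
      exact inv_le_of_inv_le₀ (by positivity) (hlow z hz)) hz
  rw [hnorm0, norm_inv, le_inv_comm₀ (by positivity) (norm_pos_iff.2 (hne z hz))] at hlower
  rwa [mul_inv, ← Real.exp_neg, neg_neg, one_div, inv_inv, mul_comm] at hlower

theorem exists_forall_norm_le_of_injOn_of_omits (A : ℝ) {r : ℝ} (hr : r < 1) :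
    ∃ B : ℝ, ∀ (ψ : ℂ → ℂ) (a : ℂ), DifferentiableOn ℂ ψ (ball 0 1) → InjOn ψ (ball 0 1) →
      ψ 0 = 0 → ball 0 1 ⊆ ψ '' ball 0 1 → a ∉ ψ '' ball 0 1 → ‖a‖ ≤ A →
      ∀ z ∈ closedBall (0 : ℂ) r, ‖ψ z‖ ≤ B := by
  set B := 2 * Real.exp (2 * Real.log (6 * A) * r / (1 - r))
  refine ⟨A * (1 + (B + 1) ^ 2), fun ψ a hd hi h0 hball ha haA z hz => ?_⟩
  have ha1 := one_le_norm_of_notMem_image hball ha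
  obtain ⟨S, hSd, hS0, hS⟩ := exists_sqrt_one_sub_div hd h0 ha
  have hzr : ‖z‖ ≤ r := mem_closedBall_zero_iff.1 hz
  have hzball : z ∈ ball (0 : ℂ) 1 := mem_ball_zero_iff.2 (hzr.trans_lt hr)
  have hA : 0 ≤ A := (norm_nonneg a).trans haA
  have hr0 : 0 ≤ r := (norm_nonneg z).trans hzr
  have hlog : 0 ≤ Real.log (6 * A) := Real.log_nonneg (by linarith)
  have hupper : ‖1 + S z‖ ≤ B :=
    (norm_one_add_sqrt_le hd hi h0 hball ha hSd hS0 hS hzball).trans (by simp only [B]; gcongr)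
  have hSB : ‖S z‖ ≤ B + 1 := by
    have := norm_sub_le (1 + S z) 1
    rw [add_sub_cancel_left, norm_one] at this
    linarith
  calc ‖ψ z‖ = ‖a‖ * ‖1 - S z ^ 2‖ := by rw [hS z hzball, norm_mul]
    _ ≤ ‖a‖ * (1 + ‖S z‖ ^ 2) := by
      gcongr
      exact (norm_sub_le _ _).trans_eq (by rw [norm_one, norm_pow])
    _ ≤ A * (1 + (B + 1) ^ 2) := by gcongr

end Growth

section Subordination

variable {ψ f : ℂ → ℂ} {r : ℝ} {x z : ℂ}

theorem exists_subordination (hd : DifferentiableOn ℂ ψ (ball 0 1)) (hi : InjOn ψ (ball 0 1))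
    (h0 : ψ 0 = 0) (hfd : DifferentiableOn ℂ f (ball 0 r)) (hf0 : f 0 = 0)
    (hsub : f '' ball 0 r ⊆ ψ '' ball 0 1) :
    ∃ k : ℂ → ℂ, DifferentiableOn ℂ k (ball 0 r) ∧ MapsTo k (ball 0 r) (closedBall (k 0) 1) ∧
      k 0 = 0 ∧ ∀ x ∈ ball (0 : ℂ) r, k x ∈ ball (0 : ℂ) 1 ∧ ψ (k x) = f x := by
  have hg := hi.leftInvOn_invFunOn
  set g := Function.invFunOn ψ (ball 0 1)
  have hk0 : g (f 0) = 0 := by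
    have := hg (mem_ball_self one_pos)
    rw [h0] at this
    rw [hf0, this]
  have hk : ∀ x ∈ ball (0 : ℂ) r, g (f x) ∈ ball (0 : ℂ) 1 ∧ ψ (g (f x)) = f x := fun x hx => by
    obtain ⟨z, hz, hzx⟩ := hsub (mem_image_of_mem f hx)
    rw [← hzx, hg hz]
    exact ⟨hz, rfl⟩
  refine ⟨g ∘ f, (differentiableOn_leftInvOn isOpen_ball hd hg).comp hfd
    fun x hx => hsub (mem_image_of_mem f hx), fun x hx => ?_, hk0, hk⟩
  rw [Function.comp_apply, Function.comp_apply, hk0]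
  exact ball_subset_closedBall (hk x hx).1

theorem deriv_eq_mul_of_subordination {k : ℂ → ℂ} (hd : DifferentiableOn ℂ ψ (ball 0 1))
    (hr : 0 < r) (hkd : DifferentiableOn ℂ k (ball 0 r)) (hk0 : k 0 = 0)
    (hk : ∀ x ∈ ball (0 : ℂ) r, ψ (k x) = f x) : deriv f 0 = deriv ψ 0 * deriv k 0 := by
  have hball := ball_mem_nhds (0 : ℂ) hr
  have hev : f =ᶠ[𝓝 0] ψ ∘ k := by
    filter_upwards [hball] with x hx using (hk x hx).symm
  rw [hev.deriv_eq, deriv_comp 0 (by rw [hk0]; exact hd.differentiableAt (ball_mem_nhds 0 one_pos))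
    (hkd.differentiableAt hball), hk0]

theorem norm_deriv_mul_le_of_image_subset (hd : DifferentiableOn ℂ ψ (ball 0 1))
    (hi : InjOn ψ (ball 0 1)) (h0 : ψ 0 = 0) (hr : 0 < r) (hfd : DifferentiableOn ℂ f (ball 0 r))
    (hf0 : f 0 = 0) (hsub : f '' ball 0 r ⊆ ψ '' ball 0 1) :
    ‖deriv f 0‖ * r ≤ ‖deriv ψ 0‖ := by
  obtain ⟨k, hkd, hmaps, hk0, hk⟩ := exists_subordination hd hi h0 hfd hf0 hsub
  rw [deriv_eq_mul_of_subordination hd hr hkd hk0 fun x hx => (hk x hx).2, norm_mul, mul_assoc]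
  exact mul_le_of_le_one_right (norm_nonneg _)
    ((le_div_iff₀ hr).1 (Complex.norm_deriv_le_div_of_mapsTo_ball hkd hmaps hr))

theorem norm_le_div_of_image_subset (hd : DifferentiableOn ℂ ψ (ball 0 1))
    (hi : InjOn ψ (ball 0 1)) (h0 : ψ 0 = 0) (hfd : DifferentiableOn ℂ f (ball 0 r))
    (hf0 : f 0 = 0) (hsub : f '' ball 0 r ⊆ ψ '' ball 0 1) (hx : x ∈ ball 0 r)
    (hz : z ∈ ball 0 1) (hzx : ψ z = f x) : ‖z‖ ≤ ‖x‖ / r := by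
  obtain ⟨k, hkd, hmaps, hk0, hk⟩ := exists_subordination hd hi h0 hfd hf0 hsub
  have hkx : k x = z := hi (hk x hx).1 hz ((hk x hx).2.trans hzx.symm)
  have hschwarz := Complex.dist_le_div_mul_dist_of_mapsTo_ball hkd hmaps hx
  rwa [hk0, hkx, dist_zero_right, dist_zero_right, one_div_mul_eq_div] at hschwarz

theorem eqOn_of_image_subset_of_deriv_eq (hd : DifferentiableOn ℂ ψ (ball 0 1))
    (hi : InjOn ψ (ball 0 1)) (h0 : ψ 0 = 0) (hfd : DifferentiableOn ℂ f (ball 0 1))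
    (hf0 : f 0 = 0) (hsub : f '' ball 0 1 ⊆ ψ '' ball 0 1) (hderiv : deriv f 0 = deriv ψ 0) :
    EqOn f ψ (ball 0 1) := by
  obtain ⟨k, hkd, hmaps, hk0, hk⟩ := exists_subordination hd hi h0 hfd hf0 hsub
  have hk' : deriv k 0 = 1 := by
    have := deriv_eq_mul_of_subordination hd one_pos hkd hk0 fun x hx => (hk x hx).2
    exact mul_left_cancel₀ (deriv_ne_zero_of_injOn isOpen_ball hd hi (mem_ball_self one_pos))
      (by rw [← this, hderiv, mul_one])
  intro z hz
  have haffine := Complex.affine_of_mapsTo_ball_of_norm_dslope_eq_div hkd hmaps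
    (mem_ball_self one_pos) (by rw [dslope_same, hk', norm_one, div_one]) hz
  simp only [dslope_same, hk0, hk', sub_zero, smul_eq_mul, mul_one, zero_add] at haffine
  rw [← (hk z hz).2, haffine]

end Subordination

section Kernel

/-- A univalent map `ψ` of the unit disk with `ψ 0 = 0` and `ψ' 0 > 0`; the positivity of the
derivative is encoded as `ψ' 0 = |ψ' 0|`, since univalence already gives `ψ' 0 ≠ 0`. -/
structure IsNormalizedUnivalent (ψ : ℂ → ℂ) : Prop where
  differentiableOn : DifferentiableOn ℂ ψ (ball 0 1)
  injOn : InjOn ψ (ball 0 1)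
  map_zero : ψ 0 = 0
  deriv_eq_norm : deriv ψ 0 = ‖deriv ψ 0‖

variable {ι : Type*} {ψ : ι → ℂ → ℂ} {ψ₀ F : ℂ → ℂ}

theorem norm_deriv_le_of_kernel {l : Filter ι} [l.NeBot]
    (hψ : ∀ᶠ t in l, IsNormalizedUnivalent (ψ t)) (hψ₀ : IsNormalizedUnivalent ψ₀)
    (hinner : ∀ r < (1 : ℝ), ∀ᶠ t in l, ψ₀ '' ball 0 r ⊆ ψ t '' ball 0 1)
    (hderiv : Tendsto (fun t => deriv (ψ t) 0) l (𝓝 (deriv F 0))) :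
    ‖deriv ψ₀ 0‖ ≤ ‖deriv F 0‖ := by
  have hr : ∀ r ∈ Ioo (0 : ℝ) 1, ‖deriv ψ₀ 0‖ * r ≤ ‖deriv F 0‖ := fun r hr => by
    refine ge_of_tendsto hderiv.norm ?_
    filter_upwards [hψ, hinner r hr.2] with t ht hsub
    exact norm_deriv_mul_le_of_image_subset ht.differentiableOn ht.injOn ht.map_zero hr.1
      (hψ₀.differentiableOn.mono (ball_subset_ball hr.2.le)) hψ₀.map_zero hsub
  have hlim : Tendsto (fun r : ℝ => ‖deriv ψ₀ 0‖ * r) (𝓝[<] 1) (𝓝 (‖deriv ψ₀ 0‖ * 1)) :=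
    (tendsto_id.mono_left nhdsWithin_le_nhds).const_mul _
  rw [mul_one] at hlim
  exact le_of_tendsto hlim (eventually_of_mem (Ioo_mem_nhdsLT one_pos) hr)

theorem image_subset_image_of_kernel {l : Filter ι} [l.NeBot]
    (hψ : ∀ᶠ t in l, IsNormalizedUnivalent (ψ t))
    (hψ₀ : IsNormalizedUnivalent ψ₀)
    (houter : ∀ v ∈ frontier (ψ₀ '' ball 0 1),
      ∃ w : ι → ℂ, Tendsto w l (𝓝 v) ∧ ∃ᶠ t in l, w t ∉ ψ t '' ball 0 1)
    (hF : TendstoLocallyUniformlyOn ψ F l (ball 0 1)) (hF0 : F 0 = 0) (hF' : deriv F 0 ≠ 0) :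
    F '' ball 0 1 ⊆ ψ₀ '' ball 0 1 := by
  have hψd := hψ.mono fun t ht => ht.differentiableOn
  have hO := isOpen_image_of_injOn isOpen_ball hψ₀.differentiableOn hψ₀.injOn
  have hball : IsPreconnected (ball (0 : ℂ) 1) := (convex_ball 0 1).isPreconnected
  refine (hball.image F (hF.differentiableOn hψd isOpen_ball).continuousOn
    ).subset_of_closure_inter_subset hO
    ⟨0, ⟨0, mem_ball_self one_pos, hF0⟩, ⟨0, mem_ball_self one_pos, hψ₀.map_zero⟩⟩ ?_
  rintro _ ⟨hcl, z, hz, rfl⟩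
  by_contra hnot
  obtain ⟨w, hw, homit⟩ := houter _ (by rw [hO.frontier_eq]; exact ⟨hcl, hnot⟩)
  have hconst := eqOn_const_of_frequently_notMem_image isOpen_ball hball hψd hF hw homit hz rfl
  exact hF' ((hconst.eventuallyEq_of_mem (ball_mem_nhds 0 one_pos)).deriv_eq.trans
    (deriv_const 0 _))

theorem tendstoLocallyUniformlyOn_of_kernel (l : Ultrafilter ι)
    (hψ : ∀ᶠ t in l, IsNormalizedUnivalent (ψ t)) (hψ₀ : IsNormalizedUnivalent ψ₀)
    (hbdd : ∀ r < (1 : ℝ), ∃ B : ℝ, ∀ᶠ t in l, ∀ z ∈ closedBall (0 : ℂ) r, ‖ψ t z‖ ≤ B)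
    (hinner : ∀ r < (1 : ℝ), ∀ᶠ t in l, ψ₀ '' ball 0 r ⊆ ψ t '' ball 0 1)
    (houter : ∀ v ∈ frontier (ψ₀ '' ball 0 1),
      ∃ w : ι → ℂ, Tendsto w l (𝓝 v) ∧ ∃ᶠ t in l, w t ∉ ψ t '' ball 0 1) :
    TendstoLocallyUniformlyOn ψ ψ₀ l (ball 0 1) := by
  have hψd := hψ.mono fun t ht => ht.differentiableOn
  have h0 : (0 : ℂ) ∈ ball (0 : ℂ) 1 := mem_ball_self one_pos
  obtain ⟨F, hF⟩ := exists_tendstoLocallyUniformlyOn_of_locallyBounded l isOpen_ball hψd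
    fun K hK hKc => by
      obtain ⟨r, hr, hKr⟩ := exists_lt_subset_ball hKc.isClosed hK
      obtain ⟨B, hB⟩ := hbdd r hr
      exact ⟨B, hB.mono fun t ht z hz => ht z (ball_subset_closedBall (hKr hz))⟩
  have hF0 : F 0 = 0 := tendsto_nhds_unique (hF.tendsto_at h0)
    (tendsto_const_nhds.congr' (hψ.mono fun t ht => ht.map_zero.symm))
  have hderiv : Tendsto (fun t => deriv (ψ t) 0) l (𝓝 (deriv F 0)) :=
    (hF.deriv hψd isOpen_ball).tendsto_at h0
  have hle := norm_deriv_le_of_kernel hψ hψ₀ hinner hderiv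
  have hψ₀' := deriv_ne_zero_of_injOn isOpen_ball hψ₀.differentiableOn hψ₀.injOn h0
  have hFd := hF.differentiableOn hψd isOpen_ball
  have hsub := image_subset_image_of_kernel hψ hψ₀ houter hF hF0
    (norm_pos_iff.1 ((norm_pos_iff.2 hψ₀').trans_le hle))
  have hge : ‖deriv F 0‖ ≤ ‖deriv ψ₀ 0‖ := by
    simpa using norm_deriv_mul_le_of_image_subset hψ₀.differentiableOn hψ₀.injOn hψ₀.map_zero
      one_pos hFd hF0 hsub
  have hnorm : deriv F 0 = ‖deriv F 0‖ := tendsto_nhds_unique hderiv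
    ((Complex.continuous_ofReal.tendsto _).comp hderiv.norm |>.congr'
      (hψ.mono fun t ht => ht.deriv_eq_norm.symm))
  exact hF.congr_right (eqOn_of_image_subset_of_deriv_eq hψ₀.differentiableOn hψ₀.injOn
    hψ₀.map_zero hFd hF0 hsub (by rw [hnorm, hψ₀.deriv_eq_norm, hge.antisymm hle]))

theorem tendsto_of_tendsto_apply_of_kernel (l : Ultrafilter ι)
    (hψ : ∀ᶠ t in l, IsNormalizedUnivalent (ψ t)) (hψ₀ : IsNormalizedUnivalent ψ₀)
    (hinner : ∀ r < (1 : ℝ), ∀ᶠ t in l, ψ₀ '' ball 0 r ⊆ ψ t '' ball 0 1)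
    (hlim : TendstoLocallyUniformlyOn ψ ψ₀ l (ball 0 1)) {z : ι → ℂ} {z₀ : ℂ}
    (hz₀ : z₀ ∈ ball (0 : ℂ) 1) (hz : ∀ᶠ t in l, z t ∈ ball (0 : ℂ) 1)
    (hψz : Tendsto (fun t => ψ t (z t)) l (𝓝 (ψ₀ z₀))) : Tendsto z l (𝓝 z₀) := by
  obtain ⟨ρ, hz₀ρ, hρ⟩ := exists_between (mem_ball_zero_iff.1 hz₀)
  obtain ⟨r, hρr, hr⟩ := exists_between hρ
  have hr0 : 0 < r := (norm_nonneg z₀).trans_lt (hz₀ρ.trans hρr)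
  have himage : ψ₀ '' ball 0 ρ ∈ 𝓝 (ψ₀ z₀) :=
    (isOpen_image_of_injOn isOpen_ball (hψ₀.differentiableOn.mono (ball_subset_ball hρ.le))
      (hψ₀.injOn.mono (ball_subset_ball hρ.le))).mem_nhds
      (mem_image_of_mem _ (mem_ball_zero_iff.2 hz₀ρ))
  have hclosed : ∀ᶠ t in l, z t ∈ closedBall (0 : ℂ) (ρ / r) := by
    filter_upwards [hψ, hz, hinner r hr, hψz himage] with t ht htz hsub ⟨x, hx, hxz⟩
    have hle := norm_le_div_of_image_subset ht.differentiableOn ht.injOn ht.map_zero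
      (hψ₀.differentiableOn.mono (ball_subset_ball hr.le)) hψ₀.map_zero hsub
      (ball_subset_ball hρr.le hx) htz hxz.symm
    rw [mem_ball_zero_iff] at hx
    exact mem_closedBall_zero_iff.2 (hle.trans (by gcongr))
  obtain ⟨z', hz', hzz'⟩ : ∃ z' ∈ closedBall (0 : ℂ) (ρ / r), Tendsto z l (𝓝 z') :=
    (isCompact_closedBall _ _).ultrafilter_le_nhds (l.map z) (le_principal_iff.2 hclosed)
  have hz'1 : z' ∈ ball (0 : ℂ) 1 := closedBall_subset_ball ((div_lt_one hr0).2 hρr) hz'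
  have hψz' : Tendsto (fun t => ψ t (z t)) l (𝓝 (ψ₀ z')) :=
    hlim.tendsto_comp (hψ₀.differentiableOn.continuousOn z' hz'1) hz'1
      (tendsto_nhdsWithin_iff.2 ⟨hzz', hz⟩)
  rwa [← hψ₀.injOn hz'1 hz₀ (tendsto_nhds_unique hψz' hψz)]

end Kernel

section LengthArea

open MeasureTheory

theorem lintegral_enorm_deriv_sq_mul_comp {f : ℂ → ℂ} {S : Set ℂ} (hS : IsOpen S)
    (hf : DifferentiableOn ℂ f S) (hi : InjOn f S) (H : ℂ → ENNReal) :
    ∫⁻ z in S, ‖deriv f z‖ₑ ^ 2 * H (f z) = ∫⁻ w in f '' S, H w := by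
  have hderiv : ∀ z ∈ S, HasFDerivWithinAt f
      ((ContinuousLinearMap.toSpanSingleton ℂ (deriv f z)).restrictScalars ℝ) S z := fun z hz =>
    ((hf.differentiableAt (hS.mem_nhds hz)).hasDerivAt.hasFDerivAt.restrictScalars
      ℝ).hasFDerivWithinAt
  rw [lintegral_image_eq_lintegral_abs_det_fderiv_mul volume hS.measurableSet hderiv hi]
  refine setLIntegral_congr_fun hS.measurableSet fun z _ => ?_
  congr 1
  simp [ContinuousLinearMap.det, LinearMap.det_restrictScalars, Algebra.norm_complex_apply,
    Complex.normSq_eq_norm_sq, ENNReal.ofReal_pow]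

theorem enorm_sub_sq_le_lintegral {E : Type*} [NormedAddCommGroup E] [NormedSpace ℝ E]
    [CompleteSpace E] {a b : ℝ} (hab : a ≤ b) {Y Y' : ℝ → E}
    (hY : ∀ x ∈ Icc a b, HasDerivAt Y (Y' x) x) (hY' : ContinuousOn Y' (Icc a b)) :
    ‖Y b - Y a‖ₑ ^ 2 ≤ ENNReal.ofReal (b - a) * ∫⁻ x in Ioc a b, ‖Y' x‖ₑ ^ 2 := by
  have hint : Y b - Y a = ∫ x in Ioc a b, Y' x := by
    rw [← intervalIntegral.integral_of_le hab]
    rw [← uIcc_of_le hab] at hY hY'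
    exact (intervalIntegral.integral_eq_sub_of_hasDerivAt hY hY'.intervalIntegrable).symm
  have hmeas : AEMeasurable (fun x => ‖Y' x‖ₑ) (volume.restrict (Ioc a b)) :=
    ((hY'.mono Ioc_subset_Icc_self).aestronglyMeasurable measurableSet_Ioc).enorm
  have hholder := ENNReal.lintegral_mul_le_Lp_mul_Lq (volume.restrict (Ioc a b))
    Real.HolderConjugate.two_two hmeas (aemeasurable_const (b := 1))
  simp only [Pi.mul_apply, mul_one, ENNReal.rpow_two, one_pow, lintegral_one,
    Measure.restrict_apply_univ, Real.volume_Ioc] at hholder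
  calc ‖Y b - Y a‖ₑ ^ 2 ≤ ((∫⁻ x in Ioc a b, ‖Y' x‖ₑ ^ 2) ^ (1 / 2 : ℝ) *
        ENNReal.ofReal (b - a) ^ (1 / 2 : ℝ)) ^ 2 := by
        gcongr
        exact hint ▸ (enorm_integral_le_lintegral_enorm _).trans hholder
    _ = _ := by
        rw [mul_comm, mul_pow, ← ENNReal.rpow_two, ← ENNReal.rpow_two, ← ENNReal.rpow_mul,
          ← ENNReal.rpow_mul]
        norm_num

theorem measurable_polar {H : ℂ → ENNReal} (hH : Measurable H) :
    Measurable fun p : ℝ × ℝ =>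
      ENNReal.ofReal p.1 * H (p.1 * Complex.exp (p.2 * Complex.I)) := by
  have : Measurable fun p : ℝ × ℝ => (p.1 * Complex.exp (p.2 * Complex.I) : ℂ) :=
    Continuous.measurable (by fun_prop)
  fun_prop

theorem lintegral_polar {H : ℂ → ENNReal} :
    ∫⁻ z, H z = ∫⁻ p in (Ioi (0 : ℝ)) ×ˢ (Ioo (-Real.pi) Real.pi),
      ENNReal.ofReal p.1 * H (p.1 * Complex.exp (p.2 * Complex.I)) := by
  rw [← Complex.lintegral_comp_polarCoord_symm, polarCoord_target]
  refine lintegral_congr fun p => ?_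
  rw [Complex.polarCoord_symm_apply, Complex.exp_mul_I, smul_eq_mul]
  push_cast
  rfl

theorem lintegral_polar_radius {H : ℂ → ENNReal} (hH : Measurable H) :
    ∫⁻ z, H z = ∫⁻ r in Ioi (0 : ℝ), ∫⁻ θ in Ioo (-Real.pi) Real.pi,
      ENNReal.ofReal r * H (r * Complex.exp (θ * Complex.I)) := by
  rw [lintegral_polar, Measure.volume_eq_prod, ← Measure.prod_restrict,
    lintegral_prod _ (measurable_polar hH).aemeasurable]

theorem lintegral_polar_angle {H : ℂ → ENNReal} (hH : Measurable H) :
    ∫⁻ z, H z = ∫⁻ θ in Ioo (-Real.pi) Real.pi, ∫⁻ r in Ioi (0 : ℝ),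
      ENNReal.ofReal r * H (r * Complex.exp (θ * Complex.I)) := by
  rw [lintegral_polar, Measure.volume_eq_prod, ← Measure.prod_restrict,
    lintegral_prod_symm _ (measurable_polar hH).aemeasurable]

theorem lintegral_Ioo_ofReal_inv {ε c : ℝ} (hε : 0 < ε) (hεc : ε ≤ c) :
    ∫⁻ r in Ioo ε c, ENNReal.ofReal r⁻¹ = ENNReal.ofReal (Real.log (c / ε)) := by
  rw [← integral_inv_of_pos hε (hε.trans_le hεc), intervalIntegral.integral_of_le hεc,
    ← restrict_Ioo_eq_restrict_Ioc, ofReal_integral_eq_lintegral_ofReal]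
  · exact ((continuousOn_id.inv₀ fun x hx => (hε.trans_le hx.1).ne').integrableOn_Icc).mono_set
      Ioo_subset_Icc_self
  · filter_upwards [ae_restrict_mem measurableSet_Ioo] with r hr
    exact inv_nonneg.2 (hε.trans hr.1).le

theorem lintegral_annulus_inv_norm_sq {ε c : ℝ} (hε : 0 < ε) (hεc : ε ≤ c) :
    ∫⁻ w in {w : ℂ | ‖w‖ ∈ Ioo ε c}, (‖w‖ₑ ^ 2)⁻¹ =
      ENNReal.ofReal (2 * Real.pi * Real.log (c / ε)) := by
  have hS : MeasurableSet {w : ℂ | ‖w‖ ∈ Ioo ε c} := measurable_norm measurableSet_Ioo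
  have hmeas : Measurable ({w : ℂ | ‖w‖ ∈ Ioo ε c}.indicator fun w => (‖w‖ₑ ^ 2)⁻¹) :=
    (by fun_prop : Measurable fun w : ℂ => (‖w‖ₑ ^ 2)⁻¹).indicator hS
  have hinv : ∀ θ : ℝ, ∀ r ∈ Ioi (0 : ℝ), ENNReal.ofReal r *
      {w : ℂ | ‖w‖ ∈ Ioo ε c}.indicator (fun w => (‖w‖ₑ ^ 2)⁻¹)
        (r * Complex.exp (θ * Complex.I)) =
      (Ioo ε c).indicator (fun r => ENNReal.ofReal r⁻¹) r := by
    intro θ r (hr : 0 < r)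
    have hn : ‖(r * Complex.exp (θ * Complex.I) : ℂ)‖ = r := by
      rw [norm_mul, Complex.norm_exp_ofReal_mul_I, mul_one, Complex.norm_of_nonneg hr.le]
    by_cases h : r ∈ Ioo ε c
    · rw [indicator_of_mem h, indicator_of_mem (by rwa [mem_ofPred_eq, hn]), ← ofReal_norm, hn,
        ENNReal.ofReal_inv_of_pos hr, sq, ENNReal.mul_inv (by simp) (by simp), ← mul_assoc,
        ENNReal.mul_inv_cancel (by simpa using hr) (by simp), one_mul]
    · rw [indicator_of_notMem h, indicator_of_notMem (by rwa [mem_ofPred_eq, hn]), mul_zero]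
  have hradial : ∀ θ : ℝ, ∫⁻ r in Ioi (0 : ℝ), ENNReal.ofReal r *
      {w : ℂ | ‖w‖ ∈ Ioo ε c}.indicator (fun w => (‖w‖ₑ ^ 2)⁻¹)
        (r * Complex.exp (θ * Complex.I)) = ENNReal.ofReal (Real.log (c / ε)) := fun θ => by
    rw [setLIntegral_congr_fun measurableSet_Ioi (hinv θ), lintegral_indicator measurableSet_Ioo,
      Measure.restrict_restrict measurableSet_Ioo,
      inter_eq_left.2 (Ioo_subset_Ioi_self.trans (Ioi_subset_Ioi hε.le)),
      lintegral_Ioo_ofReal_inv hε hεc]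
  rw [← lintegral_indicator hS, lintegral_polar_angle hmeas, lintegral_congr hradial,
    lintegral_const, Measure.restrict_apply_univ, Real.volume_Ioo,
    ← ENNReal.ofReal_mul (Real.log_nonneg ((one_le_div hε).2 hεc))]
  ring_nf

end LengthArea

section AnnulusCrossing

open MeasureTheory

theorem exists_crossing_subinterval {q : ℝ → ℝ} {a b ε c : ℝ} (hab : a ≤ b) (hεc : ε < c)
    (hq : ContinuousOn q (Icc a b)) (ha : c ≤ q a) (hb : q b ≤ ε) :
    ∃ a' b', a ≤ a' ∧ a' ≤ b' ∧ b' ≤ b ∧ q a' = c ∧ q b' = ε ∧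
      ∀ x ∈ Ioo a' b', q x ∈ Ioo ε c := by
  obtain ⟨b', ⟨hb', hqb'⟩, hleast⟩ :=
    (isCompact_Icc.of_isClosed_subset (hq.preimage_isClosed_of_isClosed isClosed_Icc isClosed_Iic)
      inter_subset_left).exists_isLeast ⟨b, ⟨hab, le_rfl⟩, hb⟩
  have hq' : ContinuousOn q (Icc a b') := hq.mono (Icc_subset_Icc_right hb'.2)
  obtain ⟨a', ⟨ha', hqa'⟩, hgreatest⟩ :=
    (isCompact_Icc.of_isClosed_subset (hq'.preimage_isClosed_of_isClosed isClosed_Icc isClosed_Ici)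
      inter_subset_left).exists_isGreatest ⟨a, ⟨le_rfl, hb'.1⟩, ha⟩
  have hqb : q b' = ε := by
    obtain ⟨x, hx, rfl⟩ := intermediate_value_Icc' hb'.1 hq' ⟨hqb', hεc.le.trans ha⟩
    rw [hx.2.antisymm (hleast ⟨⟨hx.1, hx.2.trans hb'.2⟩, le_refl (q x)⟩)]
  have hqa : q a' = c := by
    obtain ⟨x, hx, rfl⟩ := intermediate_value_Icc' ha'.2 (hq'.mono (Icc_subset_Icc_left ha'.1))
      ⟨hqb.trans_le hεc.le, hqa'⟩
    rw [hx.1.antisymm (hgreatest ⟨⟨ha'.1.trans hx.1, hx.2⟩, le_refl (q x)⟩)]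
  refine ⟨a', b', ha'.1, ha'.2, hb'.2, hqa, hqb, fun x hx => ⟨?_, ?_⟩⟩
  · by_contra! h
    exact hx.2.not_ge (hleast ⟨⟨ha'.1.trans hx.1.le, hx.2.le.trans hb'.2⟩, h⟩)
  · by_contra! h
    exact hx.1.not_ge (hgreatest ⟨⟨ha'.1.trans hx.1.le, hx.2.le⟩, h⟩)

theorem hasDerivAt_log_norm {p : ℝ → ℂ} {p' : ℂ} {x : ℝ} (hp : HasDerivAt p p' x)
    (hx : p x ≠ 0) : HasDerivAt (fun y => Real.log ‖p y‖) (p' / p x).re x := by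
  have hlog := (hp.div_const (p x)).clog_real (by rw [div_self hx]; exact Complex.one_mem_slitPlane)
  rw [div_self hx, div_one] at hlog
  have hre := (Complex.reCLM.hasFDerivAt.comp_hasDerivAt x hlog).add_const (Real.log ‖p x‖)
  refine hre.congr_of_eventuallyEq ?_
  filter_upwards [hp.continuousAt.eventually_ne hx] with y hy
  simp [Complex.log_re, Real.log_div (norm_ne_zero_iff.2 hy) (norm_ne_zero_iff.2 hx)]

theorem enorm_log_norm_sub_sq_le_lintegral {p p' : ℝ → ℂ} {a b : ℝ} (hab : a ≤ b)
    (hp : ∀ x ∈ Icc a b, HasDerivAt p (p' x) x) (hp' : ContinuousOn p' (Icc a b))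
    (h0 : ∀ x ∈ Icc a b, p x ≠ 0) :
    ‖Real.log ‖p b‖ - Real.log ‖p a‖‖ₑ ^ 2 ≤
      ENNReal.ofReal (b - a) * ∫⁻ x in Ioc a b, ‖p' x‖ₑ ^ 2 * (‖p x‖ₑ ^ 2)⁻¹ := by
  have hpc : ContinuousOn p (Icc a b) := fun x hx => (hp x hx).continuousAt.continuousWithinAt
  refine (enorm_sub_sq_le_lintegral hab (fun x hx => hasDerivAt_log_norm (hp x hx) (h0 x hx))
    (Complex.continuous_re.comp_continuousOn (hp'.div hpc h0))).trans ?_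
  refine mul_le_mul' le_rfl (setLIntegral_mono' measurableSet_Ioc fun x hx => ?_)
  rw [ENNReal.inv_pow, ← enorm_inv (h0 x (Ioc_subset_Icc_self hx)), ← mul_pow, ← enorm_mul,
    ← div_eq_mul_inv]
  gcongr
  exact enorm_le_iff_norm_le.2 (Complex.abs_re_le_norm _)

theorem log_sq_le_lintegral_of_crossing {p p' : ℝ → ℂ} {a b ε c : ℝ} (hab : a ≤ b) (hε : 0 < ε)
    (hεc : ε < c) (hp : ∀ x ∈ Icc a b, HasDerivAt p (p' x) x) (hp' : ContinuousOn p' (Icc a b))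
    (ha : c ≤ ‖p a‖) (hb : ‖p b‖ ≤ ε) :
    ENNReal.ofReal (Real.log (c / ε)) ^ 2 ≤ ENNReal.ofReal (b - a) * ∫⁻ x in Ioo a b,
      {x | ‖p x‖ ∈ Ioo ε c}.indicator (fun x => ‖p' x‖ₑ ^ 2 * (‖p x‖ₑ ^ 2)⁻¹) x := by
  have hpc : ContinuousOn p (Icc a b) := fun x hx => (hp x hx).continuousAt.continuousWithinAt
  obtain ⟨a', b', haa', hab', hbb', hqa, hqb, hq⟩ := exists_crossing_subinterval hab hεc
    hpc.norm ha hb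
  have hsub : Icc a' b' ⊆ Icc a b := Icc_subset_Icc haa' hbb'
  have hne : ∀ x ∈ Icc a' b', p x ≠ 0 := fun x hx => norm_pos_iff.1 <| by
    rcases eq_endpoints_or_mem_Ioo_of_mem_Icc hx with rfl | rfl | hx
    exacts [hqa ▸ hε.trans hεc, hqb ▸ hε, hε.trans (hq x hx).1]
  calc ENNReal.ofReal (Real.log (c / ε)) ^ 2
      = ‖Real.log ‖p b'‖ - Real.log ‖p a'‖‖ₑ ^ 2 := by
        rw [hqa, hqb, enorm_sub_rev, ← Real.log_div (hε.trans hεc).ne' hε.ne',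
          Real.enorm_of_nonneg (Real.log_nonneg ((one_le_div hε).2 hεc.le))]
    _ ≤ ENNReal.ofReal (b' - a') * ∫⁻ x in Ioc a' b', ‖p' x‖ₑ ^ 2 * (‖p x‖ₑ ^ 2)⁻¹ :=
        enorm_log_norm_sub_sq_le_lintegral hab' (fun x hx => hp x (hsub hx)) (hp'.mono hsub) hne
    _ = ENNReal.ofReal (b' - a') * ∫⁻ x in Ioo a' b',
          {x | ‖p x‖ ∈ Ioo ε c}.indicator (fun x => ‖p' x‖ₑ ^ 2 * (‖p x‖ₑ ^ 2)⁻¹) x := by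
        rw [← restrict_Ioo_eq_restrict_Ioc]
        exact congrArg _ (setLIntegral_congr_fun measurableSet_Ioo fun x hx =>
          (indicator_of_mem (s := {x | ‖p x‖ ∈ Ioo ε c}) (hq x hx)
            fun x => ‖p' x‖ₑ ^ 2 * (‖p x‖ₑ ^ 2)⁻¹).symm)
    _ ≤ _ := by
        gcongr

/-- The area density, in the source of `f`, of the logarithmic metric `|dw| / |w|` on the part of
the image of `U` lying in the annulus `ε < |w| < c`. -/
noncomputable def logAreaDensity (f : ℂ → ℂ) (U : Set ℂ) (ε c : ℝ) : ℂ → ENNReal :=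
  (U ∩ f ⁻¹' {w | ‖w‖ ∈ Ioo ε c}).indicator fun z => ‖deriv f z‖ₑ ^ 2 * (‖f z‖ₑ ^ 2)⁻¹

variable {f : ℂ → ℂ} {U : Set ℂ} {ε c : ℝ}

theorem isOpen_inter_preimage_annulus (hU : IsOpen U) (hf : DifferentiableOn ℂ f U) :
    IsOpen (U ∩ f ⁻¹' {w | ‖w‖ ∈ Ioo ε c}) :=
  hf.continuousOn.isOpen_inter_preimage hU (isOpen_Ioo.preimage continuous_norm)

theorem measurable_logAreaDensity (hU : IsOpen U) (hf : DifferentiableOn ℂ f U) :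
    Measurable (logAreaDensity f U ε c) := by
  have hcont : ContinuousOn (fun z => (‖f z‖ₑ ^ 2)⁻¹) (U ∩ f ⁻¹' {w | ‖w‖ ∈ Ioo ε c}) :=
    (ENNReal.continuous_pow 2).inv.comp_continuousOn (hf.continuousOn.mono inter_subset_left).enorm
  classical
  have hmeas := hcont.measurable_piecewise (continuousOn_const (c := 0))
    (isOpen_inter_preimage_annulus hU hf).measurableSet
  rw [← Pi.zero_def, piecewise_eq_indicator] at hmeas
  convert ((measurable_deriv f).enorm.pow_const 2).mul hmeas using 1
  exact funext fun z => indicator_mul_right ..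

theorem lintegral_logAreaDensity_le (hU : IsOpen U) (hf : DifferentiableOn ℂ f U)
    (hi : InjOn f U) (hε : 0 < ε) (hεc : ε ≤ c) :
    ∫⁻ z, logAreaDensity f U ε c z ≤ ENNReal.ofReal (2 * Real.pi * Real.log (c / ε)) := by
  have hS : IsOpen (U ∩ f ⁻¹' {w | ‖w‖ ∈ Ioo ε c}) := isOpen_inter_preimage_annulus hU hf
  calc ∫⁻ z, logAreaDensity f U ε c z
      = ∫⁻ z in U ∩ f ⁻¹' {w | ‖w‖ ∈ Ioo ε c}, ‖deriv f z‖ₑ ^ 2 * (‖f z‖ₑ ^ 2)⁻¹ := by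
        rw [← lintegral_indicator hS.measurableSet]
        rfl
    _ = ∫⁻ w in f '' (U ∩ f ⁻¹' {w | ‖w‖ ∈ Ioo ε c}), (‖w‖ₑ ^ 2)⁻¹ :=
        lintegral_enorm_deriv_sq_mul_comp hS (hf.mono inter_subset_left) (hi.mono inter_subset_left)
          fun w => (‖w‖ₑ ^ 2)⁻¹
    _ ≤ ∫⁻ w in {w : ℂ | ‖w‖ ∈ Ioo ε c}, (‖w‖ₑ ^ 2)⁻¹ :=
        lintegral_mono_set (image_subset_iff.2 inter_subset_right)
    _ = _ := lintegral_annulus_inv_norm_sq hε hεc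

theorem log_sq_le_lintegral_logAreaDensity (hU : IsOpen U) (hf : DifferentiableOn ℂ f U)
    (hε : 0 < ε) (hεc : ε < c) {a b θ : ℝ} (ha : 0 < a) (hab : a ≤ b) (hba : b ≤ 2 * a)
    (hray : ∀ r ∈ Icc a b, (r * Complex.exp (θ * Complex.I) : ℂ) ∈ U)
    (hfa : c ≤ ‖f (a * Complex.exp (θ * Complex.I))‖)
    (hfb : ‖f (b * Complex.exp (θ * Complex.I))‖ ≤ ε) :
    ENNReal.ofReal (Real.log (c / ε)) ^ 2 ≤ ∫⁻ r in Ioi (0 : ℝ),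
      ENNReal.ofReal r * logAreaDensity f U ε c (r * Complex.exp (θ * Complex.I)) := by
  set e : ℝ → ℂ := fun r => r * Complex.exp (θ * Complex.I)
  have he : Continuous e := by fun_prop
  have hder : ∀ x ∈ Icc a b, HasDerivAt (fun r => f (e r))
      (deriv f (e x) * Complex.exp (θ * Complex.I)) x := fun x hx => by
    have := (hasDerivAt_id x).ofReal_comp.mul_const (Complex.exp (θ * Complex.I))
    rw [Complex.ofReal_one, one_mul] at this
    exact (hf.differentiableAt (hU.mem_nhds (hray x hx))).hasDerivAt.comp x this
  have hder' : ContinuousOn (fun r => deriv f (e r) * Complex.exp (θ * Complex.I)) (Icc a b) :=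
    ((hf.deriv hU).continuousOn.comp he.continuousOn hray).mul continuousOn_const
  have hexp : ‖Complex.exp (θ * Complex.I)‖ₑ = 1 := by
    rw [← ofReal_norm, Complex.norm_exp_ofReal_mul_I, ENNReal.ofReal_one]
  refine (log_sq_le_lintegral_of_crossing hab hε hεc hder hder' hfa hfb).trans ?_
  rw [← lintegral_const_mul' _ _ ENNReal.ofReal_ne_top]
  calc _ ≤ ∫⁻ r in Ioo a b, ENNReal.ofReal r * logAreaDensity f U ε c (e r) := by
        refine setLIntegral_mono' measurableSet_Ioo fun r hr => ?_
        gcongr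
        · linarith [hr.1]
        · simp [logAreaDensity, indicator, hray r (Ioo_subset_Icc_self hr), hexp, e]
    _ ≤ _ := lintegral_mono_set fun r hr => ha.trans hr.1

end AnnulusCrossing

section AngularWidth

open MeasureTheory

variable {f : ℂ → ℂ} {A : Set ℂ} {ε c : ℝ} {x z : ℂ}

theorem abs_arg_eq_arccos (hz : z ≠ 0) : |z.arg| = Real.arccos (z.re / ‖z‖) := by
  rw [← Complex.cos_arg hz, ← Real.cos_abs,
    Real.arccos_cos (abs_nonneg _) (Complex.abs_arg_le_pi z)]

theorem exists_mem_abs_arg_eq (hA : IsPreconnected A) (h0 : (0 : ℂ) ∉ A) (hx : x ∈ A)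
    (hxarg : x.arg = 0) (hz : z ∈ A) {θ : ℝ} (hθ : θ ∈ Icc 0 |z.arg|) : ∃ w ∈ A, |w.arg| = θ := by
  have hne : ∀ w ∈ A, w ≠ 0 := fun w hw => ne_of_mem_of_not_mem hw h0
  have hcont : ContinuousOn (fun w : ℂ => |w.arg|) A :=
    (Real.continuous_arccos.comp_continuousOn (Complex.continuous_re.continuousOn.div
      continuous_norm.continuousOn fun w hw => norm_ne_zero_iff.2 (hne w hw))).congr
      fun w hw => abs_arg_eq_arccos (hne w hw)
  exact hA.intermediate_value hx hz hcont (by simpa [hxarg] using hθ)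

theorem log_sq_mul_volume_le (hf : DifferentiableOn ℂ f (ball 0 1 \ {0}))
    (hi : InjOn f (ball 0 1 \ {0})) (hε : 0 < ε) (hεc : ε < c)
    (hc : ∀ z ∈ sphere (0 : ℂ) (1 / 2), c ≤ ‖f z‖) {G : Set ℝ} (hG : G ⊆ Ioo (-Real.pi) Real.pi)
    (hGf : ∀ θ ∈ G, ∃ r ∈ Ioo (1 / 2 : ℝ) 1, ‖f (r * Complex.exp (θ * Complex.I))‖ ≤ ε) :
    ENNReal.ofReal (Real.log (c / ε)) ^ 2 * volume G ≤
      ENNReal.ofReal (2 * Real.pi * Real.log (c / ε)) := by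
  have hU : IsOpen (ball (0 : ℂ) 1 \ {0}) := isOpen_ball.sdiff isClosed_singleton
  have hmeas := measurable_logAreaDensity (ε := ε) (c := c) hU hf
  set J : ℝ → ENNReal := fun θ => ∫⁻ r in Ioi (0 : ℝ), ENNReal.ofReal r *
    logAreaDensity f (ball 0 1 \ {0}) ε c (r * Complex.exp (θ * Complex.I))
  have hGJ : ∀ θ ∈ G, ENNReal.ofReal (Real.log (c / ε)) ^ 2 ≤ J θ := fun θ hθ => by
    obtain ⟨r, ⟨hr, hr1⟩, hfr⟩ := hGf θ hθ
    have hn : ∀ s : ℝ, 0 ≤ s → ‖(s * Complex.exp (θ * Complex.I) : ℂ)‖ = s := fun s hs => by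
      rw [norm_mul, Complex.norm_exp_ofReal_mul_I, mul_one, Complex.norm_of_nonneg hs]
    refine log_sq_le_lintegral_logAreaDensity hU hf hε hεc (one_half_pos (α := ℝ)) hr.le
      (by linarith) (fun s hs => ?_) (hc _ ?_) hfr
    · have hs0 : 0 < s := one_half_pos.trans_le hs.1
      exact ⟨mem_ball_zero_iff.2 ((hn s hs0.le).trans_lt (hs.2.trans_lt hr1)),
        norm_pos_iff.1 ((hn s hs0.le).symm ▸ hs0)⟩
    · rw [mem_sphere_zero_iff_norm, hn _ one_half_pos.le]
  calc ENNReal.ofReal (Real.log (c / ε)) ^ 2 * volume G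
      ≤ ENNReal.ofReal (Real.log (c / ε)) ^ 2 * volume.restrict (Ioo (-Real.pi) Real.pi)
          {θ | ENNReal.ofReal (Real.log (c / ε)) ^ 2 ≤ J θ} := by
        rw [Measure.restrict_apply' measurableSet_Ioo]
        gcongr
        exact fun θ hθ => ⟨hGJ θ hθ, hG hθ⟩
    _ ≤ ∫⁻ θ in Ioo (-Real.pi) Real.pi, J θ :=
        mul_meas_ge_le_lintegral (measurable_polar hmeas).lintegral_prod_left' _
    _ ≤ _ := (lintegral_polar_angle hmeas).symm.trans_le
        (lintegral_logAreaDensity_le hU hf hi hε hεc.le)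

theorem abs_arg_le_of_norm_le (hf : DifferentiableOn ℂ f (ball 0 1 \ {0}))
    (hi : InjOn f (ball 0 1 \ {0})) (hε : 0 < ε) (hεc : ε < c)
    (hc : ∀ z ∈ sphere (0 : ℂ) (1 / 2), c ≤ ‖f z‖) (hA : IsPreconnected A)
    (hA1 : A ⊆ ball 0 1 \ closedBall 0 (1 / 2)) (hAf : ∀ z ∈ A, ‖f z‖ ≤ ε)
    (hx : x ∈ A) (hxarg : x.arg = 0) (hz : z ∈ A) : |z.arg| ≤ 4 * Real.pi / Real.log (c / ε) := by
  have hL : 0 < Real.log (c / ε) := Real.log_pos ((one_lt_div hε).2 hεc)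
  have h0 : (0 : ℂ) ∉ A := fun h => (hA1 h).2 (mem_closedBall_self one_half_pos.le)
  set G : Set ℝ := {θ | θ ∈ Ioo (-Real.pi) Real.pi ∧ ∃ w ∈ A, w.arg = θ}
  have hcover : Ioo 0 |z.arg| ⊆ G ∪ -G := fun θ hθ => by
    obtain ⟨w, hw, hwθ⟩ := exists_mem_abs_arg_eq hA h0 hx hxarg hz (Ioo_subset_Icc_self hθ)
    have hθπ := hθ.2.trans_le (Complex.abs_arg_le_pi z)
    rcases (abs_eq hθ.1.le).1 hwθ with h | h
    · exact Or.inl ⟨⟨by linarith [hθ.1, Real.pi_pos], hθπ⟩, w, hw, h⟩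
    · exact Or.inr ⟨⟨by linarith, by linarith [hθ.1, Real.pi_pos]⟩, w, hw, h⟩
  have hvol : ENNReal.ofReal |z.arg| ≤ 2 * volume G := by
    calc ENNReal.ofReal |z.arg| = volume (Ioo 0 |z.arg|) := by rw [Real.volume_Ioo, sub_zero]
      _ ≤ volume G + volume (-G) := (measure_mono hcover).trans (measure_union_le _ _)
      _ = 2 * volume G := by rw [Measure.measure_neg, two_mul]
  have hG := log_sq_mul_volume_le hf hi hε hεc hc (G := G) (fun θ hθ => hθ.1) <| by
    rintro _ ⟨-, w, hw, rfl⟩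
    refine ⟨‖w‖, ⟨?_, mem_ball_zero_iff.1 (hA1 hw).1⟩, ?_⟩
    · exact not_le.1 fun h => (hA1 hw).2 (mem_closedBall_zero_iff.2 h)
    · rw [Complex.norm_mul_exp_arg_mul_I]
      exact hAf w hw
  have hmul : Real.log (c / ε) ^ 2 * |z.arg| ≤ 2 * (2 * Real.pi * Real.log (c / ε)) := by
    rw [← ENNReal.ofReal_le_ofReal_iff (by positivity), ENNReal.ofReal_mul (by positivity),
      ENNReal.ofReal_mul zero_le_two, ENNReal.ofReal_pow hL.le]
    calc _ ≤ ENNReal.ofReal (Real.log (c / ε)) ^ 2 * (2 * volume G) := by gcongr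
      _ = 2 * (ENNReal.ofReal (Real.log (c / ε)) ^ 2 * volume G) := mul_left_comm ..
      _ ≤ _ := by
        rw [ENNReal.ofReal_ofNat]
        gcongr
  rw [le_div_iff₀ hL]
  exact le_of_mul_le_mul_left (by linarith) hL

theorem norm_sub_le_of_norm_le (hf : DifferentiableOn ℂ f (ball 0 1 \ {0}))
    (hi : InjOn f (ball 0 1 \ {0})) (hε : 0 < ε) (hεc : ε < c)
    (hc : ∀ z ∈ sphere (0 : ℂ) (1 / 2), c ≤ ‖f z‖) (hA : IsPreconnected A)
    (hA1 : A ⊆ ball 0 1 \ closedBall 0 (1 / 2)) (hAf : ∀ z ∈ A, ‖f z‖ ≤ ε)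
    (hx : x ∈ A) (hz : z ∈ A) :
    ‖z / ‖z‖ - x / ‖x‖‖ ≤ 4 * Real.pi / Real.log (c / ε) := by
  have hne : ∀ w ∈ A, w ≠ 0 := fun w hw h =>
    (hA1 hw).2 (h ▸ mem_closedBall_self one_half_pos.le)
  set u : ℂ := x / ‖x‖ with hu
  have hu1 : ‖u‖ = 1 := by simp [hu, norm_ne_zero_iff.2 (hne x hx)]
  have hu0 : u ≠ 0 := norm_pos_iff.1 (hu1 ▸ one_pos)
  have hmaps : MapsTo (u * ·) (ball (0 : ℂ) 1 \ {0}) (ball 0 1 \ {0}) := fun w hw => by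
    simpa [hu1, hu0] using hw
  have hA' : (u⁻¹ * ·) '' A ⊆ ball 0 1 \ closedBall 0 (1 / 2) := image_subset_iff.2 fun w hw => by
    simpa [hu1] using hA1 hw
  have harg : |(u⁻¹ * z).arg| ≤ 4 * Real.pi / Real.log (c / ε) := by
    refine abs_arg_le_of_norm_le (f := fun w => f (u * w)) (A := (u⁻¹ * ·) '' A) (x := u⁻¹ * x)
      (hf.comp (by fun_prop) hmaps) (hi.comp (mul_right_injective₀ hu0).injOn hmaps) hε hεc
      (fun w hw => hc _ (by simpa [hu1] using hw)) (hA.image _ (by fun_prop)) hA' ?_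
      (mem_image_of_mem _ hx) ?_ (mem_image_of_mem _ hz)
    · rintro _ ⟨w, hw, rfl⟩
      simpa [mul_inv_cancel_left₀ hu0] using hAf w hw
    · rw [hu, inv_div, div_mul_cancel₀ _ (hne x hx), Complex.arg_ofReal_of_nonneg (norm_nonneg x)]
  have hz' : u⁻¹ * (z / ‖z‖) = Complex.exp (Complex.I * (u⁻¹ * z).arg) := by
    have hz0 : (‖z‖ : ℂ) ≠ 0 := Complex.ofReal_ne_zero.2 (norm_ne_zero_iff.2 (hne z hz))
    have hpolar := Complex.norm_mul_exp_arg_mul_I (u⁻¹ * z)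
    rw [norm_mul, norm_inv, hu1, inv_one, one_mul] at hpolar
    rw [mul_comm Complex.I, ← mul_div_assoc, div_eq_iff hz0, mul_comm _ (‖z‖ : ℂ), hpolar]
  calc ‖z / ‖z‖ - u‖ = ‖u⁻¹ * (z / ‖z‖) - 1‖ := by
        rw [← mul_right_inj' (inv_ne_zero (norm_ne_zero_iff.2 hu0)), ← norm_inv, ← norm_mul,
          mul_sub, inv_mul_cancel₀ hu0, norm_inv, hu1, inv_one, one_mul]
    _ ≤ |(u⁻¹ * z).arg| := hz' ▸ Real.norm_exp_I_mul_ofReal_sub_one_le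
    _ ≤ _ := harg

end AngularWidth

section Lindelof

open MeasureTheory

variable {g : ℂ → ℂ} {δ : ℝ} {v w : ℂ} {S : Set ℂ}

theorem enorm_sub_sq_le_lintegral_arc (hS : IsOpen S) (hg : DifferentiableOn ℂ g S)
    {r a b : ℝ} (hr : 0 ≤ r) (hab : a ≤ b)
    (harc : ∀ θ ∈ Icc a b, (r * Complex.exp (θ * Complex.I) : ℂ) ∈ S) :
    ‖g (r * Complex.exp (b * Complex.I)) - g (r * Complex.exp (a * Complex.I))‖ₑ ^ 2 ≤
      ENNReal.ofReal (b - a) * ∫⁻ θ in Ioc a b,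
        ENNReal.ofReal r ^ 2 * ‖deriv g (r * Complex.exp (θ * Complex.I))‖ₑ ^ 2 := by
  set e : ℝ → ℂ := fun θ => r * Complex.exp (θ * Complex.I)
  have he : ∀ θ : ℝ, HasDerivAt e (e θ * Complex.I) θ := fun θ => by
    have := (((hasDerivAt_id θ).ofReal_comp.mul_const Complex.I).cexp.const_mul (r : ℂ))
    simpa only [e, Function.comp_id, id_eq, Complex.ofReal_one, one_mul, mul_assoc] using this
  have hec : Continuous e := by fun_prop
  have hder : ∀ θ ∈ Icc a b, HasDerivAt (g ∘ e) (deriv g (e θ) * (e θ * Complex.I)) θ :=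
    fun θ hθ => (hg.differentiableAt (hS.mem_nhds (harc θ hθ))).hasDerivAt.comp θ (he θ)
  have hder' : ContinuousOn (fun θ => deriv g (e θ) * (e θ * Complex.I)) (Icc a b) :=
    ((hg.deriv hS).continuousOn.comp hec.continuousOn harc).mul (by fun_prop)
  refine (enorm_sub_sq_le_lintegral hab hder hder').trans_eq
    (congrArg _ (lintegral_congr fun θ => ?_))
  have hnorm : ‖e θ * Complex.I‖ₑ = ENNReal.ofReal r := by
    rw [← ofReal_norm, norm_mul, Complex.norm_I, mul_one, norm_mul, Complex.norm_exp_ofReal_mul_I,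
      mul_one, Complex.norm_of_nonneg hr]
  rw [enorm_mul, hnorm, mul_pow, mul_comm]

theorem mem_ball_one_iff_lt_two_mul_cos {r θ : ℝ} (hr : 0 < r) :
    (r * Complex.exp (θ * Complex.I) : ℂ) ∈ ball (1 : ℂ) 1 ↔ r < 2 * Real.cos θ := by
  have hsq : ‖(r * Complex.exp (θ * Complex.I) : ℂ) - 1‖ ^ 2 = 1 - r * (2 * Real.cos θ - r) := by
    rw [← Complex.normSq_eq_norm_sq, Complex.normSq_apply]
    simp only [Complex.sub_re, Complex.re_ofReal_mul, Complex.exp_ofReal_mul_I_re, Complex.one_re,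
      Complex.sub_im, Complex.im_ofReal_mul, Complex.exp_ofReal_mul_I_im, Complex.one_im]
    linear_combination r ^ 2 * Real.sin_sq_add_cos_sq θ
  rw [mem_ball, dist_eq_norm, ← sq_lt_one_iff₀ (norm_nonneg _), hsq, sub_lt_self_iff,
    mul_pos_iff_of_pos_left hr, sub_pos]

theorem enorm_sub_sq_le_lintegral_circle (hg : DifferentiableOn ℂ g (ball 1 1 ∩ ball 0 δ))
    (hw : w ∈ ball (1 : ℂ) 1 ∩ ball 0 δ) :
    ‖g w - g ‖w‖‖ₑ ^ 2 ≤ ENNReal.ofReal (Real.pi * ‖w‖) * ∫⁻ θ in Ioo (-Real.pi) Real.pi,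
      ENNReal.ofReal ‖w‖ * (ball 1 1 ∩ ball 0 δ).indicator (fun z => ‖deriv g z‖ₑ ^ 2)
        (‖w‖ * Complex.exp (θ * Complex.I)) := by
  have hw0 : 0 < ‖w‖ := norm_pos_iff.2 fun h => by simp [h] at hw
  have hpolar := Complex.norm_mul_exp_arg_mul_I w
  have hcos : ‖w‖ < 2 * Real.cos w.arg :=
    (mem_ball_one_iff_lt_two_mul_cos hw0).1 (hpolar.symm ▸ hw.1)
  have hargπ : |w.arg| < Real.pi := (Complex.abs_arg_le_pi w).lt_of_ne fun h => by
    rw [← Real.cos_abs, h, Real.cos_pi] at hcos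
    linarith
  have harc : ∀ θ : ℝ, |θ| ≤ |w.arg| →
      (‖w‖ * Complex.exp (θ * Complex.I) : ℂ) ∈ ball (1 : ℂ) 1 ∩ ball 0 δ := fun θ hθ => by
    refine ⟨(mem_ball_one_iff_lt_two_mul_cos hw0).2 (hcos.trans_le ?_), ?_⟩
    · rw [← Real.cos_abs, ← Real.cos_abs θ]
      linarith [Real.cos_le_cos_of_nonneg_of_le_pi (abs_nonneg θ) hargπ.le hθ]
    · simpa [Complex.norm_exp_ofReal_mul_I] using hw.2
  have hkey : ∀ a b : ℝ, a ≤ b → b - a ≤ Real.pi → -|w.arg| ≤ a → b ≤ |w.arg| →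
      ‖g (‖w‖ * Complex.exp (b * Complex.I)) - g (‖w‖ * Complex.exp (a * Complex.I))‖ₑ ^ 2 ≤
        ENNReal.ofReal (Real.pi * ‖w‖) * ∫⁻ θ in Ioo (-Real.pi) Real.pi, ENNReal.ofReal ‖w‖ *
          (ball 1 1 ∩ ball 0 δ).indicator (fun z => ‖deriv g z‖ₑ ^ 2)
            (‖w‖ * Complex.exp (θ * Complex.I)) := by
    intro a b hab hba ha hb
    have harc' : ∀ θ ∈ Icc a b, (‖w‖ * Complex.exp (θ * Complex.I) : ℂ) ∈
        ball (1 : ℂ) 1 ∩ ball 0 δ :=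
      fun θ hθ => harc θ (abs_le.2 ⟨ha.trans hθ.1, hθ.2.trans hb⟩)
    refine (enorm_sub_sq_le_lintegral_arc (isOpen_ball.inter isOpen_ball) hg hw0.le hab
      harc').trans ?_
    rw [ENNReal.ofReal_mul Real.pi_pos.le, mul_assoc,
      ← lintegral_const_mul' (ENNReal.ofReal ‖w‖) _ ENNReal.ofReal_ne_top]
    refine mul_le_mul' (ENNReal.ofReal_le_ofReal hba) ?_
    refine (setLIntegral_mono' measurableSet_Ioc fun θ hθ => ?_).trans
      (lintegral_mono_set fun θ hθ => ⟨by linarith [hθ.1], by linarith [hθ.2]⟩)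
    rw [indicator_of_mem (harc' θ (Ioc_subset_Icc_self hθ)), sq, mul_assoc]
  rcases le_total 0 w.arg with h | h
  · simpa [hpolar] using hkey 0 w.arg h (by linarith [le_abs_self w.arg]) (by simp)
      (le_abs_self _)
  · rw [enorm_sub_rev]
    simpa [hpolar] using hkey w.arg 0 h (by linarith [neg_abs_le w.arg]) (neg_abs_le _)
      (abs_nonneg _)

theorem exists_radius_mul_lintegral_le {H : ℂ → ENNReal} (hH : Measurable H) {ρ : ℝ}
    (hρ : 0 < ρ) :
    ∃ r ∈ Ioc ρ (2 * ρ), ENNReal.ofReal ρ * ∫⁻ θ in Ioo (-Real.pi) Real.pi,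
      ENNReal.ofReal r * H (r * Complex.exp (θ * Complex.I)) ≤
        ∫⁻ z in closedBall 0 (2 * ρ), H z := by
  have hvol : volume (Ioc ρ (2 * ρ)) = ENNReal.ofReal ρ := by rw [Real.volume_Ioc]; ring_nf
  have hvol0 : volume (Ioc ρ (2 * ρ)) ≠ 0 := by simpa [hvol] using hρ
  have hvolfin : volume (Ioc ρ (2 * ρ)) ≠ ⊤ := hvol ▸ ENNReal.ofReal_ne_top
  obtain ⟨r, hr, hle⟩ := exists_le_setLAverage hvol0 hvolfin
    (measurable_polar hH |>.lintegral_prod_right'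
      (ν := volume.restrict (Ioo (-Real.pi) Real.pi))).aemeasurable
  refine ⟨r, hr, ?_⟩
  rw [setLAverage_eq, hvol] at hle
  calc _ ≤ _ := mul_le_mul' le_rfl hle
    _ ≤ ∫⁻ s in Ioc ρ (2 * ρ), ∫⁻ θ in Ioo (-Real.pi) Real.pi,
          ENNReal.ofReal s * H (s * Complex.exp (θ * Complex.I)) := ENNReal.mul_div_le
    _ ≤ ∫⁻ s in Ioc ρ (2 * ρ), ∫⁻ θ in Ioo (-Real.pi) Real.pi, ENNReal.ofReal s *
          (closedBall 0 (2 * ρ)).indicator H (s * Complex.exp (θ * Complex.I)) := by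
      refine setLIntegral_mono' measurableSet_Ioc fun s hs => lintegral_mono fun θ => ?_
      have hmem : (s * Complex.exp (θ * Complex.I) : ℂ) ∈ closedBall (0 : ℂ) (2 * ρ) := by
        simpa [Complex.norm_exp_ofReal_mul_I, abs_of_pos (hρ.trans hs.1)] using hs.2
      rw [indicator_of_mem hmem]
    _ ≤ _ := lintegral_mono_set (Ioc_subset_Ioi_self.trans (Ioi_subset_Ioi hρ.le))
    _ = _ := by
      rw [← lintegral_polar_radius (hH.indicator measurableSet_closedBall),
        lintegral_indicator measurableSet_closedBall]

theorem eventually_exists_radius_norm_sub_lt (hg : DifferentiableOn ℂ g (ball 1 1 ∩ ball 0 δ))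
    (hfin : ∫⁻ z in ball 1 1 ∩ ball 0 δ, ‖deriv g z‖ₑ ^ 2 ≠ ⊤) {η : ℝ} (hη : 0 < η) :
    ∀ᶠ ρ : ℝ in 𝓝[>] 0, ∃ r ∈ Ioc ρ (2 * ρ),
      ∀ w ∈ ball 1 1 ∩ ball 0 δ, ‖w‖ = r → ‖g w - g r‖ < η := by
  have hS : MeasurableSet (ball (1 : ℂ) 1 ∩ ball 0 δ) :=
    measurableSet_ball.inter measurableSet_ball
  rw [← lintegral_indicator hS] at hfin
  set H : ℂ → ENNReal := (ball 1 1 ∩ ball 0 δ).indicator fun z => ‖deriv g z‖ₑ ^ 2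
  have hH : Measurable H := ((measurable_deriv g).enorm.pow_const 2).indicator hS
  have hvol : Tendsto (fun ρ : ℝ => volume (closedBall (0 : ℂ) (2 * ρ))) (𝓝[>] 0) (𝓝 0) := by
    have hc : Continuous fun ρ : ℝ => ENNReal.ofReal (2 * ρ) ^ 2 * (NNReal.pi : ENNReal) :=
      (ENNReal.continuous_mul_const ENNReal.coe_ne_top).comp
        ((ENNReal.continuous_pow 2).comp (ENNReal.continuous_ofReal.comp (continuous_const_mul 2)))
    simpa [Complex.volume_closedBall] using (hc.tendsto 0).mono_left nhdsWithin_le_nhds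
  have htail : Tendsto (fun ρ : ℝ => ENNReal.ofReal (2 * Real.pi) *
      ∫⁻ z in closedBall 0 (2 * ρ), H z) (𝓝[>] 0) (𝓝 0) := by
    simpa only [mul_zero] using ENNReal.Tendsto.const_mul (tendsto_setLIntegral_zero hfin hvol)
      (.inr ENNReal.ofReal_ne_top)
  filter_upwards [htail.eventually_lt_const (u := ENNReal.ofReal η ^ 2) (by positivity),
    self_mem_nhdsWithin] with ρ hlt hρ
  obtain ⟨r, hr, hle⟩ := exists_radius_mul_lintegral_le hH hρ
  refine ⟨r, hr, fun w hw hwr => ?_⟩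
  have hπr : Real.pi * r ≤ 2 * Real.pi * ρ := by nlinarith [Real.pi_pos, hr.2]
  rw [← ENNReal.ofReal_lt_ofReal_iff hη, ofReal_norm]
  refine lt_of_pow_lt_pow_left' 2 ?_
  have hcirc := enorm_sub_sq_le_lintegral_circle hg hw
  rw [hwr] at hcirc
  refine (hcirc.trans ?_).trans_lt hlt
  calc _ ≤ _ := mul_le_mul' (ENNReal.ofReal_le_ofReal hπr) le_rfl
    _ ≤ _ := by
      rw [ENNReal.ofReal_mul Real.two_pi_pos.le, mul_assoc]
      exact mul_le_mul' le_rfl hle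

theorem eventually_exists_radius_norm_sub_lt_of_path (hδ : 0 < δ)
    (hg : DifferentiableOn ℂ g (ball 1 1 ∩ ball 0 δ))
    (hfin : ∫⁻ z in ball 1 1 ∩ ball 0 δ, ‖deriv g z‖ₑ ^ 2 ≠ ⊤) {σ : ℝ → ℂ}
    (hσ : ContinuousOn σ (Ioc 0 1)) (hσmem : ∀ s ∈ Ioc (0 : ℝ) 1, σ s ∈ ball (1 : ℂ) 1)
    (hσ0 : Tendsto σ (𝓝[>] 0) (𝓝 0)) (hgσ : Tendsto (g ∘ σ) (𝓝[>] 0) (𝓝 v))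
    {η : ℝ} (hη : 0 < η) :
    ∀ᶠ ρ : ℝ in 𝓝[>] 0, ∃ r ∈ Ioc ρ (2 * ρ), ‖g r - v‖ < η := by
  have hev : ∀ᶠ s in 𝓝[>] 0, s ∈ Ioc (0 : ℝ) 1 ∧ σ s ∈ ball (0 : ℂ) δ ∧
      g (σ s) ∈ ball v (η / 2) :=
    (eventually_mem_set.2 (Ioc_mem_nhdsGT one_pos)).and
      ((hσ0.eventually_mem (ball_mem_nhds 0 hδ)).and
        (hgσ.eventually_mem (ball_mem_nhds v (half_pos hη))))
  obtain ⟨s₀, hs₀, hsub⟩ := mem_nhdsGT_iff_exists_Ioc_subset.1 hev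
  have hcont : ContinuousOn (fun s => ‖σ s‖) (Ioc 0 s₀) :=
    (hσ.mono fun s hs => (hsub hs).1).norm
  have hattain : Ioc 0 ‖σ s₀‖ ⊆ (fun s => ‖σ s‖) '' Ioc 0 s₀ :=
    isPreconnected_Ioc.intermediate_value_Ioc (right_mem_Ioc.2 hs₀)
      (l := 𝓝[>] 0) (le_principal_iff.2 (Ioc_mem_nhdsGT hs₀)) hcont (by simpa using hσ0.norm)
  have hpos : 0 < ‖σ s₀‖ := norm_pos_iff.2 fun h => by
    simpa [h] using hσmem s₀ (hsub (right_mem_Ioc.2 hs₀)).1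
  filter_upwards [eventually_exists_radius_norm_sub_lt hg hfin (half_pos hη),
    Ioo_mem_nhdsGT (half_pos hpos)] with ρ ⟨r, hr, hlt⟩ hρ
  obtain ⟨s, hs, rfl⟩ := hattain ⟨hρ.1.trans hr.1, by linarith [hr.2, hρ.2]⟩
  obtain ⟨hs1, hsδ, hsv⟩ := hsub hs
  refine ⟨‖σ s‖, hr, ?_⟩
  have hclose := hlt (σ s) ⟨hσmem s hs1, hsδ⟩ rfl
  rw [← dist_eq_norm] at hclose ⊢
  linarith [dist_triangle_left (g ‖σ s‖) v (g (σ s)), mem_ball.1 hsv]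

theorem mapsTo_ball_of_lt {ρ : ℝ} (hρ : 0 < ρ) (hρ1 : ρ < 2 / 3) (hρδ : ρ < 2 / 5 * δ) :
    MapsTo (fun z : ℂ => (ρ * (3 / 2 + z) : ℂ)) (ball 0 1) (ball 1 1 ∩ ball 0 δ) := by
  intro z hz
  have hz1 : ‖(ρ : ℂ) * z‖ < ρ := by
    simpa [abs_of_pos hρ] using mul_lt_mul_of_pos_left (mem_ball_zero_iff.1 hz) hρ
  have hreal : ∀ x : ℝ, ‖(ρ * (3 / 2) - x : ℂ)‖ = |ρ * (3 / 2) - x| := fun x => by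
    rw [← Real.norm_eq_abs, ← Complex.norm_real]
    push_cast
    rfl
  have htri : ∀ x : ℝ, ‖(ρ * (3 / 2 + z) - x : ℂ)‖ ≤ |ρ * (3 / 2) - x| + ‖(ρ : ℂ) * z‖ :=
    fun x => by
      rw [← hreal x, mul_add, add_sub_right_comm]
      exact norm_add_le _ _
  have h1 := htri 1
  have h0 := htri 0
  rw [abs_of_neg (by linarith)] at h1
  rw [abs_of_pos (by linarith), Complex.ofReal_zero] at h0
  rw [Complex.ofReal_one] at h1
  exact ⟨mem_ball_iff_norm.2 (by linarith), mem_ball_iff_norm.2 (by linarith)⟩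

theorem exists_apply_eq_of_tendstoUniformlyOn {ι X Y : Type*} [TopologicalSpace X] [MetricSpace Y]
    {F : ι → X → Y} {f : X → Y} {l : Filter ι} {K : Set X} {y : Y} (hK : IsCompact K)
    (hf : ContinuousOn f K) (hF : TendstoUniformlyOn F f l K)
    (hy : ∀ η > 0, ∃ᶠ i in l, ∃ x ∈ K, dist (F i x) y < η) : ∃ x ∈ K, f x = y := by
  refine (hK.image_of_continuousOn hf).isClosed.closure_subset (Metric.mem_closure_iff.2 ?_)
  intro η hη
  obtain ⟨i, ⟨x, hx, hxy⟩, hi⟩ := ((hy _ (half_pos hη)).and_eventually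
    (Metric.tendstoUniformlyOn_iff.1 hF _ (half_pos hη))).exists
  refine ⟨f x, mem_image_of_mem f hx, ?_⟩
  rw [dist_comm]
  linarith [dist_triangle (f x) (F i x) y, hi x hx]

theorem tendsto_of_eventually_exists_radius (hδ : 0 < δ)
    (hg : DifferentiableOn ℂ g (ball 1 1 ∩ ball 0 δ))
    {B : ℝ} (hB : ∀ z ∈ ball 1 1 ∩ ball 0 δ, ‖g z‖ ≤ B)
    (hv : v ∉ g '' (ball 1 1 ∩ ball 0 δ))
    (hnear : ∀ η > 0, ∀ᶠ ρ : ℝ in 𝓝[>] 0, ∃ r ∈ Ioc ρ (2 * ρ), ‖g r - v‖ < η) :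
    Tendsto (fun r : ℝ => g r) (𝓝[>] 0) (𝓝 v) := by
  refine (tendsto_iff_ultrafilter _ _ _).2 fun l hl => ?_
  set F : ℝ → ℂ → ℂ := fun ρ z => g (ρ * (3 / 2 + z))
  have hmaps : ∀ᶠ ρ : ℝ in l, 0 < ρ ∧
      MapsTo (fun z : ℂ => (ρ * (3 / 2 + z) : ℂ)) (ball 0 1) (ball 1 1 ∩ ball 0 δ) := by
    filter_upwards [hl (Ioo_mem_nhdsGT (show (0 : ℝ) < 2 / 3 by norm_num)),
      hl (Ioo_mem_nhdsGT (show 0 < 2 / 5 * δ by positivity))] with ρ hρ hρδ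
    exact ⟨hρ.1, mapsTo_ball_of_lt hρ.1 hρ.2 hρδ.2⟩
  have hFd : ∀ᶠ ρ in l, DifferentiableOn ℂ (F ρ) (ball 0 1) :=
    hmaps.mono fun ρ hρ => hg.comp (by fun_prop) hρ.2
  obtain ⟨f, hf⟩ := exists_tendstoLocallyUniformlyOn_of_locallyBounded l isOpen_ball hFd
    fun K hK _ => ⟨B, hmaps.mono fun ρ hρ z hz => hB _ (hρ.2 (hK hz))⟩
  have hsub : closedBall (0 : ℂ) (1 / 2) ⊆ ball 0 1 := closedBall_subset_ball (by norm_num)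
  obtain ⟨z, hz, hzv⟩ := exists_apply_eq_of_tendstoUniformlyOn (isCompact_closedBall 0 (1 / 2))
    ((hf.differentiableOn hFd isOpen_ball).continuousOn.mono hsub)
    ((tendstoLocallyUniformlyOn_iff_forall_isCompact isOpen_ball).1 hf _ hsub
      (isCompact_closedBall 0 (1 / 2))) fun η hη => by
    refine (hmaps.and (hl (hnear η hη))).frequently.mono ?_
    rintro ρ ⟨⟨hρ, -⟩, r, hr, hrv⟩
    refine ⟨(r / ρ - 3 / 2 : ℝ), ?_, ?_⟩
    · have h1 : 1 < r / ρ := (one_lt_div hρ).2 hr.1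
      have h2 : r / ρ ≤ 2 := (div_le_iff₀ hρ).2 hr.2
      rw [mem_closedBall_zero_iff, Complex.norm_real, Real.norm_eq_abs, abs_le]
      constructor <;> linarith
    · have hρ0 : (ρ : ℂ) ≠ 0 := Complex.ofReal_ne_zero.2 hρ.ne'
      have hr_eq : (ρ * (3 / 2 + (r / ρ - 3 / 2 : ℝ)) : ℂ) = r := by
        push_cast
        field_simp
        ring
      rwa [← dist_eq_norm, ← hr_eq] at hrv
  have hconst := eqOn_const_of_frequently_notMem_image isOpen_ball
    (convex_ball _ _).isPreconnected hFd hf (tendsto_const_nhds (x := v))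
    (hmaps.mono fun ρ hρ ⟨x, hx, hxv⟩ => hv ⟨_, hρ.2 hx, hxv⟩).frequently (hsub hz) hzv
  have hmem : (-1 / 2 : ℂ) ∈ ball (0 : ℂ) 1 := by norm_num
  have hlim := hf.tendsto_at hmem
  rw [hconst hmem] at hlim
  refine hlim.congr fun ρ => congrArg g ?_
  ring

theorem tendsto_of_tendsto_path (hδ : 0 < δ) (hg : DifferentiableOn ℂ g (ball 1 1 ∩ ball 0 δ))
    (hi : InjOn g (ball 1 1 ∩ ball 0 δ)) {B : ℝ} (hB : ∀ z ∈ ball 1 1 ∩ ball 0 δ, ‖g z‖ ≤ B)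
    (hv : v ∉ g '' (ball 1 1 ∩ ball 0 δ)) {σ : ℝ → ℂ}
    (hσ : ContinuousOn σ (Ioc 0 1)) (hσmem : ∀ s ∈ Ioc (0 : ℝ) 1, σ s ∈ ball (1 : ℂ) 1)
    (hσ0 : Tendsto σ (𝓝[>] 0) (𝓝 0)) (hgσ : Tendsto (g ∘ σ) (𝓝[>] 0) (𝓝 v)) :
    Tendsto (fun r : ℝ => g r) (𝓝[>] 0) (𝓝 v) := by
  have harea : ∫⁻ z in ball 1 1 ∩ ball 0 δ, ‖deriv g z‖ₑ ^ 2 =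
      volume (g '' (ball 1 1 ∩ ball 0 δ)) := by
    simpa using lintegral_enorm_deriv_sq_mul_comp (isOpen_ball.inter isOpen_ball) hg hi fun _ => 1
  have hbdd : Bornology.IsBounded (g '' (ball 1 1 ∩ ball 0 δ)) :=
    isBounded_iff_forall_norm_le.2 ⟨B, forall_mem_image.2 hB⟩
  exact tendsto_of_eventually_exists_radius hδ hg hB hv fun η hη =>
    eventually_exists_radius_norm_sub_lt_of_path hδ hg (harea ▸ hbdd.measure_lt_top.ne) hσ hσmem
      hσ0 hgσ hη

/- The rotation and reflection `w ↦ ζ (1 - w)` moves the boundary point `ζ` to the origin. -/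
theorem tendsto_radial_of_tendsto_path {f : ℂ → ℂ} {ζ : ℂ} (hζ : ‖ζ‖ = 1)
    (hδ : 0 < δ) (hf : DifferentiableOn ℂ f (ball 0 1 ∩ ball ζ δ))
    (hi : InjOn f (ball 0 1 ∩ ball ζ δ)) {B : ℝ} (hB : ∀ z ∈ ball 0 1 ∩ ball ζ δ, ‖f z‖ ≤ B)
    (hv : v ∉ f '' (ball 0 1 ∩ ball ζ δ)) {σ : ℝ → ℂ}
    (hσ : ContinuousOn σ (Ioc 0 1)) (hσmem : ∀ s ∈ Ioc (0 : ℝ) 1, σ s ∈ ball (0 : ℂ) 1)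
    (hσ0 : Tendsto σ (𝓝[>] 0) (𝓝 ζ)) (hfσ : Tendsto (f ∘ σ) (𝓝[>] 0) (𝓝 v)) :
    Tendsto (fun r : ℝ => f (r * ζ)) (𝓝[<] 1) (𝓝 v) := by
  have hζ0 : ζ ≠ 0 := norm_ne_zero_iff.1 (hζ ▸ one_ne_zero)
  have hmaps : MapsTo (fun w => ζ * (1 - w)) (ball 1 1 ∩ ball 0 δ) (ball 0 1 ∩ ball ζ δ) := by
    intro w ⟨hw1, hw0⟩
    have hsub : ζ * (1 - w) - ζ = -(ζ * w) := by ring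
    constructor
    · simpa [hζ, dist_eq_norm, norm_sub_rev] using hw1
    · simpa [mem_ball, dist_eq_norm, hsub, hζ] using hw0
  have hinj : InjOn (fun w => ζ * (1 - w)) (ball 1 1 ∩ ball 0 δ) := fun a _ b _ hab =>
    sub_right_injective (mul_left_cancel₀ hζ0 hab)
  have hinv : ∀ z, ζ * (1 - (1 - z / ζ)) = z := fun z => by field_simp; ring
  have hlim : Tendsto (fun r : ℝ => f (ζ * (1 - r))) (𝓝[>] 0) (𝓝 v) := by
    refine tendsto_of_tendsto_path (g := fun w => f (ζ * (1 - w))) (σ := fun s => 1 - σ s / ζ) hδ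
      (hf.comp (by fun_prop) hmaps) (hi.comp hinj hmaps) (fun w hw => hB _ (hmaps hw)) ?_
      (by fun_prop) ?_ ?_ ?_
    · rintro ⟨w, hw, rfl⟩
      exact hv (mem_image_of_mem f (hmaps hw))
    · intro s hs
      simpa [dist_eq_norm, hζ] using hσmem s hs
    · simpa [div_self hζ0] using (hσ0.div_const ζ).const_sub 1
    · simpa only [Function.comp_def, hinv] using hfσ
  have hsub : Tendsto (fun r : ℝ => 1 - r) (𝓝[<] 1) (𝓝[>] 0) := by
    have hmaps1 : MapsTo (fun r : ℝ => 1 - r) (Iio 1) (Ioi 0) := fun r hr =>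
      mem_Ioi.2 (sub_pos.2 (mem_Iio.1 hr))
    simpa only [sub_self] using
      (continuous_sub_left (1 : ℝ)).continuousWithinAt (x := 1)
        |>.tendsto_nhdsWithin hmaps1
  refine (hlim.comp hsub).congr fun r => congrArg f ?_
  push_cast
  ring

end Lindelof

section ExteriorMap

variable {K U : Set ℂ} {φ : ℂ → ℂ} {v z : ℂ}

lemma mem_unbddComp_of_mem_connectedComponentIn (hz : z ∈ unbddComp K)
    (hv : v ∈ connectedComponentIn Kᶜ z) : v ∈ unbddComp K :=
  ⟨connectedComponentIn_subset _ _ hv, connectedComponentIn_eq hv ▸ hz.2⟩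

lemma isOpen_unbddComp (hK : IsClosed K) : IsOpen (unbddComp K) :=
  isOpen_iff_mem_nhds.2 fun _ hz =>
    mem_of_superset (hK.isOpen_compl.connectedComponentIn.mem_nhds (mem_connectedComponentIn hz.1))
      fun _ hv => mem_unbddComp_of_mem_connectedComponentIn hz hv

lemma frontier_unbddComp_subset (hK : IsClosed K) : frontier (unbddComp K) ⊆ K := by
  rw [(isOpen_unbddComp hK).frontier_eq]
  rintro z ⟨hz, hzU⟩
  by_contra hzK
  obtain ⟨v, hvC, hvU⟩ := mem_closure_iff.1 hz _
    (hK.isOpen_compl.connectedComponentIn (x := z)) (mem_connectedComponentIn hzK)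
  refine hzU (mem_unbddComp_of_mem_connectedComponentIn hvU ?_)
  rw [← connectedComponentIn_eq hvC]
  exact mem_connectedComponentIn hzK

/-- The reciprocal `1 / φ` of an exterior Riemann map, which maps the disc onto a neighbourhood of
the origin. The update gives `1 / φ` the value `1 / ∞ = 0` at the pole `0` of `φ`. -/
noncomputable def reciprocalMap (φ : ℂ → ℂ) : ℂ → ℂ :=
  Function.update (fun z => (φ z)⁻¹) 0 0

@[simp]
lemma reciprocalMap_zero : reciprocalMap φ 0 = 0 :=
  Function.update_self ..

lemma reciprocalMap_of_ne (hz : z ≠ 0) : reciprocalMap φ z = (φ z)⁻¹ :=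
  Function.update_of_ne hz ..

namespace IsNormalizedRiemannMap

lemma ne_zero (h : IsNormalizedRiemannMap U φ) (hU0 : (0 : ℂ) ∉ U) (hz : z ∈ ball 0 1 \ {0}) :
    φ z ≠ 0 :=
  ne_of_mem_of_not_mem (h.2.2.1 ▸ mem_image_of_mem φ hz) hU0

lemma mem_image_reciprocalMap (h : IsNormalizedRiemannMap U φ) :
    v ∈ reciprocalMap φ '' ball 0 1 ↔ v = 0 ∨ v⁻¹ ∈ U := by
  rw [← h.2.2.1]
  constructor
  · rintro ⟨z, hz, rfl⟩
    by_cases hz0 : z = 0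
    · exact Or.inl (by rw [hz0, reciprocalMap_zero])
    · exact Or.inr ⟨z, ⟨hz, hz0⟩, by rw [reciprocalMap_of_ne hz0, inv_inv]⟩
  · rintro (rfl | ⟨z, hz, hzv⟩)
    · exact ⟨0, mem_ball_self one_pos, reciprocalMap_zero⟩
    · exact ⟨z, hz.1, by rw [reciprocalMap_of_ne hz.2, hzv, inv_inv]⟩

lemma exists_hasDerivAt_reciprocalMap (h : IsNormalizedRiemannMap U φ) :
    ∃ c : ℝ, 0 < c ∧ HasDerivAt (reciprocalMap φ) c 0 := by
  obtain ⟨c, hc, hlim⟩ := h.2.2.2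
  refine ⟨c⁻¹, inv_pos.2 hc, hasDerivAt_iff_tendsto_slope.2 ?_⟩
  push_cast
  refine (hlim.inv₀ (Complex.ofReal_ne_zero.2 hc.ne')).congr' ?_
  filter_upwards [self_mem_nhdsWithin] with z hz
  simp [slope_def_field, reciprocalMap_of_ne hz, div_eq_mul_inv, mul_comm]

lemma injOn_reciprocalMap (h : IsNormalizedRiemannMap U φ) (hU0 : (0 : ℂ) ∉ U) :
    InjOn (reciprocalMap φ) (ball 0 1) := by
  have hne : ∀ z ∈ ball (0 : ℂ) 1, z ≠ 0 → reciprocalMap φ z ≠ 0 := fun z hz hz0 => by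
    rw [reciprocalMap_of_ne hz0]
    exact inv_ne_zero (h.ne_zero hU0 ⟨hz, hz0⟩)
  intro x hx y hy hxy
  by_cases hx0 : x = 0
  · by_contra hne'
    refine hne y hy (fun hy0 => hne' (hx0.trans hy0.symm)) ?_
    rw [← hxy, hx0, reciprocalMap_zero]
  by_cases hy0 : y = 0
  · exact absurd (by rw [hxy, hy0, reciprocalMap_zero]) (hne x hx hx0)
  rw [reciprocalMap_of_ne hx0, reciprocalMap_of_ne hy0] at hxy
  exact h.2.1 ⟨hx, hx0⟩ ⟨hy, hy0⟩ (inv_injective hxy)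

lemma isNormalizedUnivalent_reciprocalMap (h : IsNormalizedRiemannMap U φ) (hU0 : (0 : ℂ) ∉ U) :
    IsNormalizedUnivalent (reciprocalMap φ) := by
  obtain ⟨c, hc, hder⟩ := h.exists_hasDerivAt_reciprocalMap
  refine ⟨fun z hz => ?_, h.injOn_reciprocalMap hU0, reciprocalMap_zero, ?_⟩
  · rcases eq_or_ne z 0 with rfl | hz0
    · exact hder.differentiableAt.differentiableWithinAt
    have hO : IsOpen (ball (0 : ℂ) 1 \ {0}) := isOpen_ball.sdiff isClosed_singleton
    refine DifferentiableAt.differentiableWithinAt ?_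
    refine ((h.1.differentiableAt (hO.mem_nhds ⟨hz, hz0⟩)).inv
      (h.ne_zero hU0 ⟨hz, hz0⟩)).congr_of_eventuallyEq ?_
    filter_upwards [isOpen_ne.mem_nhds hz0] with w hw using reciprocalMap_of_ne hw
  · rw [hder.deriv, Complex.norm_of_nonneg hc.le]

lemma ball_subset_image_reciprocalMap (h : IsNormalizedRiemannMap U φ)
    (hU1 : Uᶜ ⊆ ball 0 1) : ball 0 1 ⊆ reciprocalMap φ '' ball 0 1 := by
  intro v hv
  rw [h.mem_image_reciprocalMap, or_iff_not_imp_left]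
  intro hv0
  by_contra hvU
  have hv1 : ‖v‖⁻¹ < 1 := by simpa only [mem_ball_zero_iff, norm_inv] using hU1 hvU
  exact (one_lt_inv₀ (norm_pos_iff.2 hv0)).2 (mem_ball_zero_iff.1 hv) |>.not_gt hv1

lemma norm_le_norm_reciprocalMap (h : IsNormalizedRiemannMap U φ) (hU0 : (0 : ℂ) ∉ U)
    (hU1 : Uᶜ ⊆ ball 0 1) (hz : z ∈ ball 0 1) : ‖z‖ ≤ ‖reciprocalMap φ z‖ := by
  rcases le_or_gt 1 ‖reciprocalMap φ z‖ with h1 | h1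
  · exact (mem_ball_zero_iff.1 hz).le.trans h1
  have hψ := h.isNormalizedUnivalent_reciprocalMap hU0
  simpa using norm_le_div_of_image_subset hψ.differentiableOn hψ.injOn hψ.map_zero
    differentiableOn_id rfl (by simpa using h.ball_subset_image_reciprocalMap hU1)
    (mem_ball_zero_iff.2 h1) hz rfl

lemma norm_le_two (h : IsNormalizedRiemannMap U φ) (hU0 : (0 : ℂ) ∉ U)
    (hU1 : Uᶜ ⊆ ball 0 1) (hz : z ∈ ball 0 1) (hz2 : 1 / 2 ≤ ‖z‖) : ‖φ z‖ ≤ 2 := by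
  have hz0 : z ≠ 0 := norm_pos_iff.1 (by linarith)
  have hle := hz2.trans (h.norm_le_norm_reciprocalMap hU0 hU1 hz)
  rw [reciprocalMap_of_ne hz0, norm_inv, one_div] at hle
  exact (inv_le_inv₀ two_pos (norm_pos_iff.2 (h.ne_zero hU0 ⟨hz, hz0⟩))).1 hle

lemma ne_zero_and_inv_mem_frontier (h : IsNormalizedRiemannMap U φ) (hU0 : (0 : ℂ) ∉ U)
    (hv : v ∈ frontier (reciprocalMap φ '' ball 0 1)) : v ≠ 0 ∧ v⁻¹ ∈ frontier U := by
  have hψ := h.isNormalizedUnivalent_reciprocalMap hU0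
  rw [(isOpen_image_of_injOn isOpen_ball hψ.differentiableOn hψ.injOn).frontier_eq,
    Set.mem_sdiff, h.mem_image_reciprocalMap, not_or] at hv
  obtain ⟨hcl, hv0, hvU⟩ := hv
  rw [frontier_eq_closure_inter_closure]
  refine ⟨hv0, ?_, subset_closure hvU⟩
  have hcl' : v ∈ closure (reciprocalMap φ '' ball 0 1 \ {0}) :=
    closure_sdiff ⟨hcl, by rwa [closure_singleton]⟩
  exact (continuousAt_inv₀ hv0).continuousWithinAt.mem_closure hcl' fun w hw =>
    (h.mem_image_reciprocalMap.1 hw.1).resolve_left hw.2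

end IsNormalizedRiemannMap

end ExteriorMap

lemma image_ball_ne_univ {ψ : ℂ → ℂ} (hd : DifferentiableOn ℂ ψ (ball 0 1))
    (hi : InjOn ψ (ball 0 1)) : ψ '' ball 0 1 ≠ univ := by
  intro hu
  have hg := hi.leftInvOn_invFunOn
  have hgd : Differentiable ℂ (Function.invFunOn ψ (ball 0 1)) :=
    differentiableOn_univ.1 (hu ▸ differentiableOn_leftInvOn isOpen_ball hd hg)
  have hmem : ∀ w, w ∈ ψ '' ball 0 1 := fun w => hu ▸ mem_univ w
  have hb : Bornology.IsBounded (range (Function.invFunOn ψ (ball 0 1))) :=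
    isBounded_ball.subset <| range_subset_iff.2 fun w => Function.invFunOn_mem (hmem w)
  have h01 := hgd.apply_eq_apply_of_bounded hb 0 1
  exact zero_ne_one (Function.invFunOn_injOn_image ψ (ball 0 1) (hmem 0) (hmem 1) h01)

lemma norm_sub_div_norm_le {z : ℂ} {η : ℝ} (hz : z ∈ ball 0 1 \ {0}) (hη : 1 - η < ‖z‖) :
    ‖z - z / ‖z‖‖ ≤ η := by
  have hz0 : ‖z‖ ≠ 0 := norm_ne_zero_iff.2 hz.2
  have hz1 : ‖z‖ < 1 := mem_ball_zero_iff.1 hz.1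
  have heq : z - z / ‖z‖ = z / ‖z‖ * (‖z‖ - 1 : ℝ) := by
    have := Complex.ofReal_ne_zero.2 hz0
    push_cast
    field_simp
  rw [heq, norm_mul, norm_div, Complex.norm_real, norm_norm, div_self hz0, one_mul,
    Complex.norm_real, Real.norm_eq_abs, abs_le]
  constructor <;> linarith

/-- The radius below which the angular width estimate bounds the oscillation of a lift by `3 η`. -/
noncomputable def trappingRadius (η c : ℝ) : ℝ :=
  c * Real.exp (-(4 * Real.pi / η))

lemma trappingRadius_pos {η c : ℝ} (hc : 0 < c) : 0 < trappingRadius η c :=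
  mul_pos hc (Real.exp_pos _)

lemma trappingRadius_lt {η c : ℝ} (hη : 0 < η) (hc : 0 < c) : trappingRadius η c < c :=
  mul_lt_of_lt_one_right hc (Real.exp_lt_one_iff.2 (neg_neg_of_pos (by positivity)))

/-- A lift `σ` of the arc `γ` issuing from `γ 0 = 0`, punctured at `0`, through a map `f` of the
punctured unit disc: the preimage of the arc, parametrized by `(0, 1]`. -/
structure IsArcLift (f : ℂ → ℂ) (γ σ : ℝ → ℂ) : Prop where
  continuousOn_arc : ContinuousOn γ (Icc 0 1)
  arc_zero : γ 0 = 0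
  continuousOn_lift : ContinuousOn σ (Ioc 0 1)
  lift_mem : ∀ s ∈ Ioc (0 : ℝ) 1, σ s ∈ ball (0 : ℂ) 1 \ {0}
  apply_lift : ∀ s ∈ Ioc (0 : ℝ) 1, f (σ s) = γ s

namespace IsArcLift

variable {f : ℂ → ℂ} {γ σ : ℝ → ℂ} {η c u s s' : ℝ} {ζ : ℂ}

lemma tendsto_arc (h : IsArcLift f γ σ) : Tendsto γ (𝓝[>] 0) (𝓝 0) := by
  have hlim := (h.continuousOn_arc 0 (left_mem_Icc.2 zero_le_one)).mono_left
    (nhdsWithin_mono (0 : ℝ) Ioc_subset_Icc_self)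
  rwa [h.arc_zero, nhdsWithin_Ioc_eq_nhdsGT zero_lt_one] at hlim

lemma exists_forall_norm_arc_le (h : IsArcLift f γ σ) {ε : ℝ} (hε : 0 < ε) :
    ∃ u ∈ Ioc (0 : ℝ) 1, ∀ s ∈ Ioc 0 u, ‖γ s‖ ≤ ε := by
  have hev : ∀ᶠ s in 𝓝[>] (0 : ℝ), ‖γ s‖ < ε := by
    simpa using h.tendsto_arc.norm.eventually_lt_const (by simpa using hε)
  obtain ⟨u, hu, hsub⟩ := mem_nhdsGT_iff_exists_Ioc_subset.1 hev
  exact ⟨min u 1, ⟨lt_min hu one_pos, min_le_right _ _⟩, fun s hs =>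
    (hsub ⟨hs.1, hs.2.trans (min_le_left _ _)⟩).le⟩

lemma one_sub_lt_norm_lift (h : IsArcLift f γ σ)
    (hlow : ∀ z ∈ closedBall 0 (1 - η) \ {0}, c ≤ ‖f z‖) (hs : s ∈ Ioc 0 1) (hγ : ‖γ s‖ < c) :
    1 - η < ‖σ s‖ := by
  by_contra! hle
  refine (hlow (σ s) ⟨by simpa using hle, (h.lift_mem s hs).2⟩).not_gt ?_
  rwa [h.apply_lift s hs]

lemma norm_lift_sub_lift_le (h : IsArcLift f γ σ) (hf : DifferentiableOn ℂ f (ball 0 1 \ {0}))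
    (hi : InjOn f (ball 0 1 \ {0})) (hη : 0 < η) (hη2 : η ≤ 1 / 2) (hc : 0 < c)
    (hlow : ∀ z ∈ closedBall 0 (1 - η) \ {0}, c ≤ ‖f z‖) (hu : u ≤ 1)
    (hγ : ∀ s ∈ Ioc 0 u, ‖γ s‖ ≤ trappingRadius η c) (hs : s ∈ Ioc 0 u) (hs' : s' ∈ Ioc 0 u) :
    ‖σ s - σ s'‖ ≤ 3 * η := by
  have hsub : Ioc 0 u ⊆ Ioc 0 1 := Ioc_subset_Ioc_right hu
  have hfar : ∀ t ∈ Ioc 0 u, 1 - η < ‖σ t‖ := fun t ht =>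
    h.one_sub_lt_norm_lift hlow (hsub ht) ((hγ t ht).trans_lt (trappingRadius_lt hη hc))
  have hangle : ‖σ s / ‖σ s‖ - σ s' / ‖σ s'‖‖ ≤ η := by
    have hlog : Real.log (c / trappingRadius η c) = 4 * Real.pi / η := by
      rw [trappingRadius, div_mul_cancel_left₀ hc.ne', ← Real.exp_neg, neg_neg, Real.log_exp]
    have hle := norm_sub_le_of_norm_le hf hi (trappingRadius_pos hc) (trappingRadius_lt hη hc)
      (fun z hz => hlow z ⟨?_, ?_⟩)
      (isPreconnected_Ioc.image _ (h.continuousOn_lift.mono hsub)) ?_ ?_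
      (mem_image_of_mem σ hs') (mem_image_of_mem σ hs)
    · rwa [hlog, div_div_cancel₀ (by positivity)] at hle
    · rw [mem_closedBall, mem_sphere.1 hz]
      linarith
    · exact ne_of_mem_sphere hz one_half_pos.ne'
    · rintro _ ⟨t, ht, rfl⟩
      refine ⟨(h.lift_mem t (hsub ht)).1, fun hmem => ?_⟩
      linarith [hfar t ht, mem_closedBall_zero_iff.1 hmem]
    · rintro _ ⟨t, ht, rfl⟩
      rw [h.apply_lift t (hsub ht)]
      exact hγ t ht
  have hradial : ∀ t ∈ Ioc 0 u, ‖σ t - σ t / ‖σ t‖‖ ≤ η := fun t ht =>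
    norm_sub_div_norm_le (h.lift_mem t (hsub ht)) (hfar t ht)
  calc ‖σ s - σ s'‖
      = ‖(σ s - σ s / ‖σ s‖) + (σ s / ‖σ s‖ - σ s' / ‖σ s'‖) - (σ s' - σ s' / ‖σ s'‖)‖ := by
        congr 1
        ring
    _ ≤ η + η + η :=
        (norm_sub_le _ _).trans (add_le_add (norm_add_le_of_le (hradial s hs) hangle)
          (hradial s' hs'))
    _ = 3 * η := by ring

lemma norm_lift_sub_limit_le (h : IsArcLift f γ σ) (hf : DifferentiableOn ℂ f (ball 0 1 \ {0}))
    (hi : InjOn f (ball 0 1 \ {0})) (hζ : Tendsto σ (𝓝[>] 0) (𝓝 ζ)) (hη : 0 < η)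
    (hη2 : η ≤ 1 / 2) (hc : 0 < c) (hlow : ∀ z ∈ closedBall 0 (1 - η) \ {0}, c ≤ ‖f z‖)
    (hu : u ≤ 1) (hγ : ∀ s ∈ Ioc 0 u, ‖γ s‖ ≤ trappingRadius η c) (hs : s ∈ Ioc 0 u) :
    ‖σ s - ζ‖ ≤ 3 * η :=
  le_of_tendsto (hζ.const_sub (σ s)).norm <|
    eventually_of_mem (Ioc_mem_nhdsGT (hs.1.trans_le hs.2)) fun _ hs' =>
      h.norm_lift_sub_lift_le hf hi hη hη2 hc hlow hu hγ hs hs'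

lemma exists_tail (h : IsArcLift f γ σ) (hf : DifferentiableOn ℂ f (ball 0 1 \ {0}))
    (hi : InjOn f (ball 0 1 \ {0}))
    (hlow : ∀ r < 1, ∃ c > 0, ∀ z ∈ closedBall 0 r \ {0}, c ≤ ‖f z‖) (hη : 0 < η)
    (hη2 : η ≤ 1 / 2) :
    ∃ u > 0, ∀ s ∈ Ioc 0 u, 1 - η < ‖σ s‖ ∧ ∀ s' ∈ Ioc 0 u, ‖σ s - σ s'‖ ≤ 3 * η := by
  obtain ⟨c, hc, hlow⟩ := hlow (1 - η) (by linarith)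
  obtain ⟨u, hu, hγ⟩ := h.exists_forall_norm_arc_le (trappingRadius_pos (η := η) hc)
  exact ⟨u, hu.1, fun s hs => ⟨h.one_sub_lt_norm_lift hlow (Ioc_subset_Ioc_right hu.2 hs)
    ((hγ s hs).trans_lt (trappingRadius_lt hη hc)), fun s' hs' =>
    h.norm_lift_sub_lift_le hf hi hη hη2 hc hlow hu.2 hγ hs hs'⟩⟩

lemma exists_tendsto_lift (h : IsArcLift f γ σ) (hf : DifferentiableOn ℂ f (ball 0 1 \ {0}))
    (hi : InjOn f (ball 0 1 \ {0}))
    (hlow : ∀ r < 1, ∃ c > 0, ∀ z ∈ closedBall 0 r \ {0}, c ≤ ‖f z‖) :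
    ∃ ζ : ℂ, ‖ζ‖ = 1 ∧ Tendsto σ (𝓝[>] 0) (𝓝 ζ) := by
  have hcauchy : Cauchy (map σ (𝓝[>] 0)) := by
    refine Metric.cauchy_iff.2 ⟨inferInstance, fun ε hε => ?_⟩
    obtain ⟨u, hu, htail⟩ := h.exists_tail hf hi hlow (η := min (1 / 2) (ε / 4)) (by positivity)
      (min_le_left _ _)
    refine ⟨σ '' Ioc 0 u, image_mem_map (Ioc_mem_nhdsGT hu), ?_⟩
    rintro _ ⟨s, hs, rfl⟩ _ ⟨s', hs', rfl⟩
    rw [dist_eq_norm]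
    linarith [(htail s hs).2 s' hs', min_le_right (1 / 2) (ε / 4)]
  obtain ⟨ζ, hζ⟩ := CompleteSpace.complete hcauchy
  refine ⟨ζ, le_antisymm ?_ (le_of_forall_pos_le_add fun ε hε => ?_), hζ⟩
  · exact le_of_tendsto (tendsto_norm.comp hζ) <| eventually_of_mem (Ioc_mem_nhdsGT one_pos)
      fun s hs => (mem_ball_zero_iff.1 (h.lift_mem s hs).1).le
  · obtain ⟨u, hu, htail⟩ := h.exists_tail hf hi hlow (η := min (1 / 2) ε) (by positivity)
      (min_le_left _ _)
    have hle : 1 - min (1 / 2) ε ≤ ‖ζ‖ := ge_of_tendsto (tendsto_norm.comp hζ) <|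
      eventually_of_mem (Ioc_mem_nhdsGT hu) fun s hs => (htail s hs).1.le
    linarith [min_le_right (1 / 2) ε]

lemma punctured_preimage_eq (h : IsArcLift f γ σ) (hi : InjOn f (ball 0 1 \ {0}))
    (hne : ∀ s ∈ Ioc (0 : ℝ) 1, γ s ≠ 0) :
    (ball 0 1 \ {0}) ∩ f ⁻¹' (γ '' Icc 0 1 \ {0}) = σ '' Ioc 0 1 := by
  ext z
  constructor
  · rintro ⟨hz, ⟨s, hs, hsz⟩, hz0⟩
    have hs0 : s ≠ 0 := by
      rintro rfl
      exact hz0 (hsz.symm.trans h.arc_zero)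
    have hs' : s ∈ Ioc (0 : ℝ) 1 := ⟨hs.1.lt_of_ne' hs0, hs.2⟩
    exact ⟨s, hs', hi (h.lift_mem s hs') hz ((h.apply_lift s hs').trans hsz)⟩
  · rintro ⟨s, hs, rfl⟩
    refine ⟨h.lift_mem s hs, ?_⟩
    rw [mem_preimage, h.apply_lift s hs]
    exact ⟨mem_image_of_mem γ (Ioc_subset_Icc_self hs), hne s hs⟩

lemma closure_image_lift_subset (h : IsArcLift f γ σ) (hζ : Tendsto σ (𝓝[>] 0) (𝓝 ζ)) :
    closure (σ '' Ioc 0 1) ⊆ insert ζ (σ '' Ioc 0 1) := by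
  have hIcc : Icc (0 : ℝ) 1 \ {0} = Ioc 0 1 := Icc_sdiff_left
  have hext : ContinuousOn (Function.update σ 0 ζ) (Icc 0 1) := by
    rw [continuousOn_update_iff, hIcc]
    exact ⟨h.continuousOn_lift, fun _ => hζ.mono_left (nhdsWithin_mono _ Ioc_subset_Ioi_self)⟩
  have himage : Function.update σ 0 ζ '' Icc 0 1 = insert ζ (σ '' Ioc 0 1) := by
    rw [← Ioc_insert_left zero_le_one, image_insert_eq, Function.update_self]
    exact congrArg _ (image_congr fun s hs => Function.update_of_ne hs.1.ne' _ _)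
  rw [← himage]
  refine closure_minimal ?_ (isCompact_Icc.image_of_continuousOn hext).isClosed
  exact himage ▸ subset_insert _ _

lemma closure_image_lift_inter_sphere (h : IsArcLift f γ σ) (hζ1 : ‖ζ‖ = 1)
    (hζ : Tendsto σ (𝓝[>] 0) (𝓝 ζ)) : closure (σ '' Ioc 0 1) ∩ sphere 0 1 = {ζ} := by
  refine Subset.antisymm ?_ (singleton_subset_iff.2 ⟨?_, by simpa using hζ1⟩)
  · rintro p ⟨hp, hp1⟩
    rcases h.closure_image_lift_subset hζ hp with rfl | ⟨s, hs, rfl⟩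
    · rfl
    · exact absurd (mem_sphere.1 hp1) (mem_ball.1 (h.lift_mem s hs).1).ne
  · exact mem_closure_of_tendsto hζ (eventually_of_mem (Ioc_mem_nhdsGT one_pos) fun s hs =>
      mem_image_of_mem σ hs)

end IsArcLift

namespace IsNormalizedRiemannMap

variable {U L : Set ℂ} {φ : ℂ → ℂ} {γ σ : ℝ → ℂ} {ζ : ℂ}

lemma inv_le_norm {z : ℂ} {M : ℝ} (h : IsNormalizedRiemannMap U φ) (hU0 : (0 : ℂ) ∉ U)
    (hz : z ∈ ball 0 1 \ {0}) (hM : ‖reciprocalMap φ z‖ ≤ M) : M⁻¹ ≤ ‖φ z‖ := by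
  rw [reciprocalMap_of_ne hz.2, norm_inv] at hM
  exact inv_le_of_inv_le₀ (norm_pos_iff.2 (h.ne_zero hU0 hz)) hM

lemma exists_pos_forall_le_norm (h : IsNormalizedRiemannMap U φ) (hU0 : (0 : ℂ) ∉ U) :
    ∀ r < 1, ∃ c > 0, ∀ z ∈ closedBall 0 r \ {0}, c ≤ ‖φ z‖ := by
  intro r hr
  have hsub : closedBall (0 : ℂ) r ⊆ ball 0 1 := closedBall_subset_ball hr
  obtain ⟨M, hM⟩ := (isCompact_closedBall (0 : ℂ) r).exists_bound_of_continuousOn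
    ((h.isNormalizedUnivalent_reciprocalMap hU0).differentiableOn.continuousOn.mono hsub)
  refine ⟨(max M 1)⁻¹, by positivity, fun z hz => ?_⟩
  exact h.inv_le_norm hU0 ⟨hsub hz.1, hz.2⟩ ((hM z hz.1).trans (le_max_left _ _))

lemma exists_isArcLift (h : IsNormalizedRiemannMap U φ) {b : ℂ} (hL : IsArcEnds L 0 b)
    (hLU : L ∩ Uᶜ = {0}) : ∃ γ σ, IsArcLift φ γ σ ∧ γ '' Icc 0 1 = L := by
  obtain ⟨γ, hγ, hγi, hγL, hγ0, -⟩ := hL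
  have hγU : MapsTo γ (Ioc 0 1) (φ '' (ball 0 1 \ {0})) := by
    intro s hs
    rw [h.2.2.1]
    by_contra hsU
    have hmem : γ s ∈ L ∩ Uᶜ := ⟨hγL ▸ mem_image_of_mem γ (Ioc_subset_Icc_self hs), hsU⟩
    have hs0 : γ s = γ 0 := (hLU ▸ hmem : γ s ∈ ({0} : Set ℂ)).trans hγ0.symm
    exact hs.1.ne' (hγi (Ioc_subset_Icc_self hs) (left_mem_Icc.2 zero_le_one) hs0)
  have hg := differentiableOn_leftInvOn (isOpen_ball.sdiff isClosed_singleton) h.1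
    h.2.1.leftInvOn_invFunOn
  exact ⟨γ, Function.invFunOn φ (ball 0 1 \ {0}) ∘ γ,
    ⟨hγ, hγ0, hg.continuousOn.comp (hγ.mono Ioc_subset_Icc_self) hγU,
      fun s hs => Function.invFunOn_mem (hγU hs), fun s hs => Function.invFunOn_eq (hγU hs)⟩, hγL⟩

lemma arc_ne_zero (h : IsNormalizedRiemannMap U φ) (hU0 : (0 : ℂ) ∉ U) (hσ : IsArcLift φ γ σ)
    {s : ℝ} (hs : s ∈ Ioc (0 : ℝ) 1) : γ s ≠ 0 :=
  hσ.apply_lift s hs ▸ h.ne_zero hU0 (hσ.lift_mem s hs)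

lemma tendsto_radial (h : IsNormalizedRiemannMap U φ) (hU0 : (0 : ℂ) ∉ U)
    (hU1 : Uᶜ ⊆ ball 0 1) (hσ : IsArcLift φ γ σ) (hζ1 : ‖ζ‖ = 1)
    (hζ : Tendsto σ (𝓝[>] 0) (𝓝 ζ)) : Tendsto (fun r : ℝ => φ (r * ζ)) (𝓝[<] 1) (𝓝 0) := by
  have hfar : ∀ z ∈ ball ζ (1 / 2), 1 / 2 < ‖z‖ := fun z hz => by
    have := norm_sub_norm_le ζ z
    rw [← dist_eq_norm, dist_comm] at this
    linarith [mem_ball.1 hz]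
  have hsub : ball 0 1 ∩ ball ζ (1 / 2) ⊆ ball 0 1 \ {0} := fun z hz =>
    ⟨hz.1, norm_pos_iff.1 (one_half_pos.trans (hfar z hz.2))⟩
  refine tendsto_radial_of_tendsto_path hζ1 one_half_pos (h.1.mono hsub) (h.2.1.mono hsub)
    (fun z hz => h.norm_le_two hU0 hU1 hz.1 (hfar z hz.2).le) ?_ hσ.continuousOn_lift
    (fun s hs => (hσ.lift_mem s hs).1) hζ ?_
  · rintro ⟨z, hz, hz0⟩
    exact h.ne_zero hU0 (hsub hz) hz0
  · exact hσ.tendsto_arc.congr' (eventually_of_mem (Ioc_mem_nhdsGT one_pos) fun s hs =>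
      (hσ.apply_lift s hs).symm)

end IsNormalizedRiemannMap

section HausdorffLimits

open TopologicalSpace

variable {E ι : Type*} [MetricSpace E] {l : Filter ι} {K : ι → NonemptyCompacts E}
  {K₀ : NonemptyCompacts E} {x : E}

lemma exists_tendsto_of_mem_nonemptyCompacts (hK : Tendsto K l (𝓝 K₀)) (hx : x ∈ K₀) :
    ∃ k : ι → E, (∀ i, k i ∈ K i) ∧ Tendsto k l (𝓝 x) := by
  choose k hk hdist using fun i => (K i).isCompact.exists_infDist_eq_dist (K i).nonempty x
  have hlim := ((lipschitz_infDist_set x).continuous.tendsto K₀).comp hK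
  rw [infDist_zero_of_mem (SetLike.mem_coe.2 hx)] at hlim
  exact ⟨k, hk, tendsto_iff_dist_tendsto_zero.2 <| hlim.congr fun i =>
    (hdist i).trans (dist_comm x (k i))⟩

lemma mem_nonemptyCompacts_of_tendsto [l.NeBot] (hK : Tendsto K l (𝓝 K₀)) {k : ι → E}
    (hk : ∀ᶠ i in l, k i ∈ K i) (hx : Tendsto k l (𝓝 x)) : x ∈ K₀ := by
  have hlim := (lipschitz_infDist.continuous.tendsto (x, K₀)).comp (hx.prodMk_nhds hK)
  have hzero : infDist x (K₀ : Set E) = 0 := tendsto_nhds_unique hlim <|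
    tendsto_const_nhds.congr' (hk.mono fun i hi => (infDist_zero_of_mem hi).symm)
  exact (K₀.isCompact.isClosed.mem_iff_infDist_zero K₀.nonempty).2 hzero

end HausdorffLimits

lemma isOpen_forall_mul_ne_one {M : Type*} [Monoid M] [TopologicalSpace M] [ContinuousMul M]
    [T1Space M] {S : Set M} (hS : IsCompact S) : IsOpen {k : M | ∀ w ∈ S, w * k ≠ 1} :=
  isOpen_iff_eventually.2 fun k hk => hS.eventually_forall_of_forall_eventually fun w hw =>
    ((continuous_snd.mul continuous_fst).tendsto (k, w)).eventually_ne (hk w hw)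

section CaratheodoryConvergence

open TopologicalSpace

lemma mul_ne_one_of_mem_image_reciprocalMap {K : Set ℂ} {φ : ℂ → ℂ} {w k : ℂ}
    (h : IsNormalizedRiemannMap (unbddComp K) φ) (hw : w ∈ reciprocalMap φ '' ball 0 1)
    (hk : k ∈ K) : w * k ≠ 1 := by
  intro hwk
  rcases h.mem_image_reciprocalMap.1 hw with rfl | hw
  · simp at hwk
  · exact hw.1 (inv_eq_of_mul_eq_one_right hwk ▸ hk)

lemma subset_image_reciprocalMap {K S : Set ℂ} {φ : ℂ → ℂ} (hK : IsClosed K) (hK0 : (0 : ℂ) ∈ K)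
    (h : IsNormalizedRiemannMap (unbddComp K) φ) (hS : IsPreconnected S) (hS0 : (0 : ℂ) ∈ S)
    (hSK : ∀ w ∈ S, ∀ k ∈ K, w * k ≠ 1) : S ⊆ reciprocalMap φ '' ball 0 1 := by
  have hU0 : (0 : ℂ) ∉ unbddComp K := fun h0 => h0.1 hK0
  have hψ := h.isNormalizedUnivalent_reciprocalMap hU0
  have hO := isOpen_image_of_injOn isOpen_ball hψ.differentiableOn hψ.injOn
  refine hS.subset_of_closure_inter_subset hO
    ⟨0, hS0, h.mem_image_reciprocalMap.2 (Or.inl rfl)⟩ ?_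
  rintro v ⟨hcl, hvS⟩
  by_contra hv
  obtain ⟨hv0, hvU⟩ := h.ne_zero_and_inv_mem_frontier hU0
    (by rw [hO.frontier_eq]; exact ⟨hcl, hv⟩)
  exact hSK v hvS _ (frontier_unbddComp_subset hK hvU) (mul_inv_cancel₀ hv0)

variable {T : Type*} {K : T → NonemptyCompacts ℂ} {φ : T → ℂ → ℂ} {t₀ : T}

lemma eventually_image_ball_subset {l : Filter T} (hK : Tendsto K l (𝓝 (K t₀)))
    (h0 : ∀ t, (0 : ℂ) ∈ K t) (hφ : ∀ t, IsNormalizedRiemannMap (unbddComp (K t)) (φ t)) {r : ℝ}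
    (hr : r < 1) :
    ∀ᶠ t in l, reciprocalMap (φ t₀) '' ball 0 r ⊆ reciprocalMap (φ t) '' ball 0 1 := by
  set S := reciprocalMap (φ t₀) '' closedBall 0 (max r 0)
  have hball : closedBall (0 : ℂ) (max r 0) ⊆ ball 0 1 :=
    closedBall_subset_ball (max_lt hr one_pos)
  have hcont : ContinuousOn (reciprocalMap (φ t₀)) (closedBall 0 (max r 0)) :=
    ((hφ t₀).isNormalizedUnivalent_reciprocalMap fun h => h.1 (h0 t₀)).differentiableOn
      |>.continuousOn.mono hball
  have hS : IsPreconnected S := (convex_closedBall _ _).isPreconnected.image _ hcont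
  have hS0 : (0 : ℂ) ∈ S :=
    ⟨0, mem_closedBall_self (le_max_right _ _), reciprocalMap_zero⟩
  have hopen := NonemptyCompacts.isOpen_subsets_of_isOpen
    (isOpen_forall_mul_ne_one ((isCompact_closedBall _ _).image_of_continuousOn hcont))
  have hmem : ∀ k ∈ (K t₀ : Set ℂ), ∀ w ∈ S, w * k ≠ 1 := fun k hk w hw =>
    mul_ne_one_of_mem_image_reciprocalMap (hφ t₀) (image_mono hball hw) hk
  filter_upwards [hK (hopen.mem_nhds hmem)] with t ht
  exact (image_mono (ball_subset_closedBall.trans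
    (closedBall_subset_closedBall (le_max_left _ _)))).trans
    (subset_image_reciprocalMap (K t).isCompact.isClosed (h0 t) (hφ t) hS hS0
      fun w hw k hk => ht hk w hw)

lemma exists_tendsto_notMem_image_reciprocalMap {l : Filter T} (hK : Tendsto K l (𝓝 (K t₀)))
    (h0 : (0 : ℂ) ∈ K t₀) (hφ : ∀ t, IsNormalizedRiemannMap (unbddComp (K t)) (φ t)) {v : ℂ}
    (hv : v ∈ frontier (reciprocalMap (φ t₀) '' ball 0 1)) :
    ∃ w : T → ℂ, Tendsto w l (𝓝 v) ∧ ∀ᶠ t in l, w t ∉ reciprocalMap (φ t) '' ball 0 1 := by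
  obtain ⟨hv0, hvU⟩ := (hφ t₀).ne_zero_and_inv_mem_frontier (fun h => h.1 h0) hv
  obtain ⟨k, hk, hlim⟩ := exists_tendsto_of_mem_nonemptyCompacts hK
    (frontier_unbddComp_subset (K t₀).isCompact.isClosed hvU)
  refine ⟨fun t => (k t)⁻¹, by simpa using hlim.inv₀ (inv_ne_zero hv0), ?_⟩
  filter_upwards [hlim.eventually_ne (inv_ne_zero hv0)] with t ht hmem
  exact mul_ne_one_of_mem_image_reciprocalMap (hφ t) hmem (hk t) (inv_mul_cancel₀ ht)

lemma tendstoLocallyUniformlyOn_reciprocalMap (l : Ultrafilter T) (hK : Tendsto K l (𝓝 (K t₀)))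
    (h0 : ∀ t, (0 : ℂ) ∈ K t) (hb : ∀ t, (unbddComp (K t))ᶜ ⊆ ball 0 1)
    (hφ : ∀ t, IsNormalizedRiemannMap (unbddComp (K t)) (φ t)) :
    TendstoLocallyUniformlyOn (fun t => reciprocalMap (φ t)) (reciprocalMap (φ t₀)) l
      (ball 0 1) := by
  have hψ := fun t => (hφ t).isNormalizedUnivalent_reciprocalMap fun h => h.1 (h0 t)
  obtain ⟨v, hv⟩ : (frontier (reciprocalMap (φ t₀) '' ball 0 1)).Nonempty :=
    nonempty_frontier_iff.2 ⟨⟨0, (hφ t₀).mem_image_reciprocalMap.2 (Or.inl rfl)⟩,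
      image_ball_ne_univ (hψ t₀).differentiableOn (hψ t₀).injOn⟩
  obtain ⟨a, ha, homit⟩ := exists_tendsto_notMem_image_reciprocalMap hK (h0 t₀) hφ hv
  refine tendstoLocallyUniformlyOn_of_kernel l (Eventually.of_forall hψ) (hψ t₀) (fun r hr => ?_)
    (fun r hr => eventually_image_ball_subset hK h0 hφ hr) fun w hw => ?_
  · obtain ⟨B, hB⟩ := exists_forall_norm_le_of_injOn_of_omits (‖v‖ + 1) hr
    refine ⟨B, ?_⟩
    filter_upwards [homit, ha.norm.eventually_le_const (lt_add_one ‖v‖)] with t ht hat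
    exact hB _ (a t) (hψ t).differentiableOn (hψ t).injOn (hψ t).map_zero
      ((hφ t).ball_subset_image_reciprocalMap (hb t)) ht hat
  · obtain ⟨w', hw', homit'⟩ := exists_tendsto_notMem_image_reciprocalMap hK (h0 t₀) hφ hw
    exact ⟨w', hw', homit'.frequently⟩

lemma exists_pos_eventually_forall_le_norm {l : Filter T} (h0 : ∀ t, (0 : ℂ) ∉ unbddComp (K t))
    (hφ : ∀ t, IsNormalizedRiemannMap (unbddComp (K t)) (φ t))
    (hlim : TendstoLocallyUniformlyOn (fun t => reciprocalMap (φ t)) (reciprocalMap (φ t₀)) l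
      (ball 0 1)) {r : ℝ} (hr : r < 1) :
    ∃ c > 0, (∀ z ∈ closedBall 0 r \ {0}, c ≤ ‖φ t₀ z‖) ∧
      ∀ᶠ t in l, ∀ z ∈ closedBall 0 r \ {0}, c ≤ ‖φ t z‖ := by
  have hsub : closedBall (0 : ℂ) r ⊆ ball 0 1 := closedBall_subset_ball hr
  obtain ⟨M, hM⟩ := (isCompact_closedBall (0 : ℂ) r).exists_bound_of_continuousOn
    (((hφ t₀).isNormalizedUnivalent_reciprocalMap (h0 t₀)).differentiableOn.continuousOn.mono hsub)
  have hbound : ∀ t z, z ∈ closedBall (0 : ℂ) r \ {0} → ‖reciprocalMap (φ t) z‖ ≤ max M 0 + 1 →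
      (max M 0 + 1)⁻¹ ≤ ‖φ t z‖ := fun t z hz hle =>
    (hφ t).inv_le_norm (h0 t) ⟨hsub hz.1, hz.2⟩ hle
  refine ⟨(max M 0 + 1)⁻¹, by positivity, fun z hz => hbound t₀ z hz ?_, ?_⟩
  · linarith [hM z hz.1, le_max_left M 0]
  · have hunif := (tendstoLocallyUniformlyOn_iff_forall_isCompact isOpen_ball).1 hlim _ hsub
      (isCompact_closedBall _ _)
    filter_upwards [Metric.tendstoUniformlyOn_iff.1 hunif 1 one_pos] with t ht z hz
    have hdist := ht z hz.1
    rw [dist_comm, dist_eq_norm] at hdist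
    refine hbound t z hz ?_
    linarith [hM z hz.1, le_max_left M 0,
      norm_le_norm_add_norm_sub' (reciprocalMap (φ t) z) (reciprocalMap (φ t₀) z)]

end CaratheodoryConvergence

section FirstExit

lemma exists_eq_and_forall_le {g : ℝ → ℝ} {a u ε : ℝ} (hau : a ≤ u)
    (hg : ContinuousOn g (Icc a u)) (ha : g a < ε) (hgu : ε ≤ g u) :
    ∃ s ∈ Ioc a u, g s = ε ∧ ∀ x ∈ Icc a s, g x ≤ ε := by
  obtain ⟨s, ⟨hs, hεs⟩, hleast⟩ :=
    (isCompact_Icc.of_isClosed_subset (hg.preimage_isClosed_of_isClosed isClosed_Icc isClosed_Ici)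
      inter_subset_left).exists_isLeast ⟨u, right_mem_Icc.2 hau, hgu⟩
  have hmin : ∀ x ∈ Icc a s, ε ≤ g x → x = s := fun x hx hle =>
    le_antisymm hx.2 (hleast ⟨⟨hx.1, hx.2.trans hs.2⟩, hle⟩)
  obtain ⟨x, hx, hgx⟩ := intermediate_value_Icc hs.1
    (hg.mono (Icc_subset_Icc_right hs.2)) ⟨ha.le, hεs⟩
  have hgs : g s = ε := hmin x hx hgx.ge ▸ hgx
  refine ⟨s, ⟨hs.1.lt_of_ne ?_, hs.2⟩, hgs, fun x hx => ?_⟩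
  · rintro rfl
    exact ha.ne hgs
  · by_contra! hlt
    exact hlt.ne' (hmin x hx hlt.le ▸ hgs)

open TopologicalSpace

variable {E T : Type*} [NormedAddCommGroup E] {L : T → NonemptyCompacts E}
  {γ : T → ℝ → E} {t₀ : T} {u ε : ℝ}

lemma eventually_exists_norm_eq_and_forall_norm_le {l : Filter T} (hL : Tendsto L l (𝓝 (L t₀)))
    (hγ : ∀ t, ContinuousOn (γ t) (Icc 0 1)) (hγ0 : ∀ t, γ t 0 = 0)
    (hγL : ∀ t, γ t '' Icc 0 1 = L t) (hε : 0 < ε) (hlt : ε < ‖γ t₀ 1‖) :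
    ∀ᶠ t in l, ∃ s ∈ Ioc (0 : ℝ) 1, ‖γ t s‖ = ε ∧ ∀ s' ∈ Ioc 0 s, ‖γ t s'‖ ≤ ε := by
  have hmem : γ t₀ 1 ∈ L t₀ := by
    rw [← SetLike.mem_coe, ← hγL]
    exact mem_image_of_mem _ (right_mem_Icc.2 zero_le_one)
  obtain ⟨k, hk, hlim⟩ := exists_tendsto_of_mem_nonemptyCompacts hL hmem
  filter_upwards [hlim.norm.eventually_const_le hlt] with t ht
  obtain ⟨v, hv, hvk⟩ : k t ∈ γ t '' Icc 0 1 := hγL t ▸ hk t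
  obtain ⟨s, hs, hεs, hle⟩ := exists_eq_and_forall_le hv.1
    ((hγ t).norm.mono (Icc_subset_Icc_right hv.2)) (by simpa [hγ0] using hε) (hvk ▸ ht)
  exact ⟨s, ⟨hs.1, hs.2.trans hv.2⟩, hεs, fun s' hs' => hle s' (Ioc_subset_Icc_self hs')⟩

lemma exists_tendsto_exit [ProperSpace E] (l : Ultrafilter T) (hL : Tendsto L l (𝓝 (L t₀)))
    (hγ : ∀ t, ContinuousOn (γ t) (Icc 0 1)) (hγ0 : ∀ t, γ t 0 = 0)
    (hγL : ∀ t, γ t '' Icc 0 1 = L t) (hne : ∀ s ∈ Ioc (0 : ℝ) 1, γ t₀ s ≠ 0)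
    (hu : u ∈ Ioc (0 : ℝ) 1) (hε : 0 < ε) :
    ∃ S : T → ℝ, ∃ s₀ ∈ Ioc 0 u,
      (∀ᶠ t in l, S t ∈ Ioc 0 1 ∧ ∀ s ∈ Ioc 0 (S t), ‖γ t s‖ ≤ ε) ∧
      Tendsto (fun t => γ t (S t)) l (𝓝 (γ t₀ s₀)) := by
  obtain ⟨v, hv, hvmin⟩ := isCompact_Icc.exists_isMinOn (nonempty_Icc.2 hu.2)
    ((hγ t₀).norm.mono (Icc_subset_Icc_left hu.1.le))
  have hvpos : 0 < ‖γ t₀ v‖ := norm_pos_iff.2 (hne v ⟨hu.1.trans_le hv.1, hv.2⟩)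
  obtain ⟨δ, hδ0, hδ⟩ := exists_between (lt_min hvpos hε)
  have hlt : ∀ s ∈ Icc u 1, δ < ‖γ t₀ s‖ := fun s hs =>
    (hδ.trans_le (min_le_left _ _)).trans_le (hvmin hs)
  obtain ⟨S, hS⟩ := (eventually_exists_norm_eq_and_forall_norm_le hL hγ hγ0 hγL hδ0
    (hlt 1 (right_mem_Icc.2 hu.2))).choice
  have hsphere : sphere (0 : E) δ ∈ l.map fun t => γ t (S t) :=
    hS.mono fun t ht => mem_sphere_zero_iff_norm.2 ht.2.1
  obtain ⟨q, hq, hlim⟩ := (isCompact_sphere (0 : E) δ).ultrafilter_le_nhds _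
    (le_principal_iff.2 hsphere)
  have hqL : q ∈ L t₀ := mem_nonemptyCompacts_of_tendsto hL (hS.mono fun t ht => by
    rw [← SetLike.mem_coe, ← hγL]
    exact mem_image_of_mem _ (Ioc_subset_Icc_self ht.1)) hlim
  obtain ⟨s₀, hs₀, rfl⟩ : q ∈ γ t₀ '' Icc 0 1 := hγL t₀ ▸ hqL
  have hnorm : ‖γ t₀ s₀‖ = δ := mem_sphere_zero_iff_norm.1 hq
  refine ⟨S, s₀, ⟨hs₀.1.lt_of_ne ?_, ?_⟩, hS.mono fun t ht => ⟨ht.1, fun s hs => ?_⟩, hlim⟩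
  · rintro rfl
    simp [hγ0, hδ0.ne] at hnorm
  · by_contra! hlt'
    exact (hlt s₀ ⟨hlt'.le, hs₀.2⟩).ne' hnorm
  · exact (ht.2.2 s hs).trans (hδ.le.trans (min_le_right _ _))

end FirstExit

section LandingPoint

open TopologicalSpace

variable {T : Type*} {K L : T → NonemptyCompacts ℂ} {φ : T → ℂ → ℂ} {γ σ : T → ℝ → ℂ}
  {ζ : T → ℂ} {t₀ : T}

lemma tendsto_lift_of_tendsto_arc (l : Ultrafilter T) (hK : Tendsto K l (𝓝 (K t₀)))
    (h0 : ∀ t, (0 : ℂ) ∈ K t) (hb : ∀ t, (unbddComp (K t))ᶜ ⊆ ball 0 1)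
    (hφ : ∀ t, IsNormalizedRiemannMap (unbddComp (K t)) (φ t))
    (hσ : ∀ t, IsArcLift (φ t) (γ t) (σ t)) {S : T → ℝ} {s₀ : ℝ}
    (hS : ∀ᶠ t in l, S t ∈ Ioc 0 1) (hs₀ : s₀ ∈ Ioc 0 1)
    (hlim : Tendsto (fun t => γ t (S t)) l (𝓝 (γ t₀ s₀))) :
    Tendsto (fun t => σ t (S t)) l (𝓝 (σ t₀ s₀)) := by
  have hU0 : ∀ t, (0 : ℂ) ∉ unbddComp (K t) := fun t h => h.1 (h0 t)
  have hψ := fun t => (hφ t).isNormalizedUnivalent_reciprocalMap (hU0 t)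
  have happly : ∀ t, ∀ s ∈ Ioc (0 : ℝ) 1, reciprocalMap (φ t) (σ t s) = (γ t s)⁻¹ :=
    fun t s hs => by
      rw [reciprocalMap_of_ne ((hσ t).lift_mem s hs).2, (hσ t).apply_lift s hs]
  refine tendsto_of_tendsto_apply_of_kernel l (Eventually.of_forall hψ) (hψ t₀)
    (fun r hr => eventually_image_ball_subset hK h0 hφ hr)
    (tendstoLocallyUniformlyOn_reciprocalMap l hK h0 hb hφ) ((hσ t₀).lift_mem s₀ hs₀).1
    (hS.mono fun t ht => ((hσ t).lift_mem _ ht).1) ?_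
  rw [happly t₀ s₀ hs₀]
  exact (hlim.inv₀ ((hφ t₀).arc_ne_zero (hU0 t₀) (hσ t₀) hs₀)).congr'
    (hS.mono fun t ht => (happly t _ ht).symm)

/- Near `0` every lifted arc is trapped close to its landing point, uniformly in `t`, so it is
enough to follow one point of each lift: the one where the arc first leaves a small disc. -/
lemma tendsto_limit_lift (l : Ultrafilter T) (hK : Tendsto K l (𝓝 (K t₀)))
    (hL : Tendsto L l (𝓝 (L t₀))) (h0 : ∀ t, (0 : ℂ) ∈ K t)
    (hb : ∀ t, (unbddComp (K t))ᶜ ⊆ ball 0 1)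
    (hφ : ∀ t, IsNormalizedRiemannMap (unbddComp (K t)) (φ t))
    (hσ : ∀ t, IsArcLift (φ t) (γ t) (σ t)) (hγL : ∀ t, γ t '' Icc 0 1 = L t)
    (hζ : ∀ t, Tendsto (σ t) (𝓝[>] 0) (𝓝 (ζ t))) : Tendsto ζ l (𝓝 (ζ t₀)) := by
  have hU0 : ∀ t, (0 : ℂ) ∉ unbddComp (K t) := fun t h => h.1 (h0 t)
  refine Metric.tendsto_nhds.2 fun e he => ?_
  set η := min (1 / 2) (e / 12)
  have hη : 0 < η := lt_min (by norm_num) (by positivity)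
  have hη2 : η ≤ 1 / 2 := min_le_left _ _
  have hηe : η ≤ e / 12 := min_le_right _ _
  obtain ⟨c, hc, hlow₀, hlow⟩ := exists_pos_eventually_forall_le_norm hU0 hφ
    (tendstoLocallyUniformlyOn_reciprocalMap l hK h0 hb hφ) (sub_lt_self 1 hη)
  have hρ := trappingRadius_pos (η := η) hc
  obtain ⟨u, hu, hγu⟩ := (hσ t₀).exists_forall_norm_arc_le hρ
  obtain ⟨S, s₀, hs₀, hS, hlim⟩ := exists_tendsto_exit l hL (fun t => (hσ t).continuousOn_arc)
    (fun t => (hσ t).arc_zero) hγL (fun s hs => (hφ t₀).arc_ne_zero (hU0 t₀) (hσ t₀) hs) hu hρ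
  have hlift := tendsto_lift_of_tendsto_arc l hK h0 hb hφ hσ (hS.mono fun t ht => ht.1)
    ⟨hs₀.1, hs₀.2.trans hu.2⟩ hlim
  have hnear₀ : ‖σ t₀ s₀ - ζ t₀‖ ≤ 3 * η := (hσ t₀).norm_lift_sub_limit_le (hφ t₀).1 (hφ t₀).2.1
    (hζ t₀) hη hη2 hc hlow₀ hu.2 hγu hs₀
  filter_upwards [hS, hlow, Metric.tendsto_nhds.1 hlift (e / 4) (by positivity)]
    with t ⟨hSt, hγt⟩ hlowt hdist
  have hnear : ‖σ t (S t) - ζ t‖ ≤ 3 * η := (hσ t).norm_lift_sub_limit_le (hφ t).1 (hφ t).2.1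
    (hζ t) hη hη2 hc hlowt hSt.2 hγt (right_mem_Ioc.2 hSt.1)
  calc dist (ζ t) (ζ t₀)
      ≤ dist (ζ t) (σ t (S t)) + dist (σ t (S t)) (σ t₀ s₀) + dist (σ t₀ s₀) (ζ t₀) :=
        dist_triangle4 _ _ _ _
    _ = ‖σ t (S t) - ζ t‖ + dist (σ t (S t)) (σ t₀ s₀) + ‖σ t₀ s₀ - ζ t₀‖ := by
        rw [dist_comm (ζ t), dist_eq_norm (σ t (S t)) (ζ t), dist_eq_norm (σ t₀ s₀) (ζ t₀)]
    _ < e := by linarith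

end LandingPoint

theorem continuous_angle_function_general {T : Type*} [TopologicalSpace T]
    {K L : T → TopologicalSpace.NonemptyCompacts ℂ} (hK : Continuous K) (hL : Continuous L)
    (h0 : ∀ t, (0 : ℂ) ∈ K t) (hb : ∀ t, (unbddComp (K t))ᶜ ⊆ ball 0 1) {φ : T → ℂ → ℂ}
    (hφ : ∀ t, IsNormalizedRiemannMap (unbddComp (K t)) (φ t))
    (harc : ∀ t, ∃ b, IsArcEnds (L t) 0 b)
    (hLK : ∀ t, (L t : Set ℂ) ∩ (unbddComp (K t))ᶜ = {0}) :
    ∃ ζ : T → Circle,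
      (∀ t, closure ((ball 0 1 \ {0}) ∩ φ t ⁻¹' (L t \ {0})) ∩ sphere 0 1 = {(ζ t : ℂ)}) ∧
      Continuous ζ ∧ ∀ t, Tendsto (fun r : ℝ => φ t (r * ζ t)) (𝓝[<] 1) (𝓝 0) := by
  have hU0 : ∀ t, (0 : ℂ) ∉ unbddComp (K t) := fun t h => h.1 (h0 t)
  choose γ σ hσ hγL using fun t => (hφ t).exists_isArcLift (harc t).choose_spec (hLK t)
  choose ζ hζ1 hζ using fun t =>
    (hσ t).exists_tendsto_lift (hφ t).1 (hφ t).2.1 ((hφ t).exists_pos_forall_le_norm (hU0 t))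
  refine ⟨fun t => ⟨ζ t, mem_sphere_zero_iff_norm.2 (hζ1 t)⟩, fun t => ?_, ?_, fun t =>
    (hφ t).tendsto_radial (hU0 t) (hb t) (hσ t) (hζ1 t) (hζ t)⟩
  · rw [← hγL, (hσ t).punctured_preimage_eq (hφ t).2.1
      fun s hs => (hφ t).arc_ne_zero (hU0 t) (hσ t) hs]
    exact (hσ t).closure_image_lift_inter_sphere (hζ1 t) (hζ t)
  · refine Continuous.subtype_mk (continuous_iff_ultrafilter.2 fun t₀ l hl => ?_) _
    exact tendsto_limit_lift l ((hK.tendsto t₀).mono_left hl) ((hL.tendsto t₀).mono_left hl)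
      h0 hb hφ hσ hγL hζ

section HausdorffContinuity

open TopologicalSpace

lemma exists_continuous_nonemptyCompacts_eq_image {A B E : Type*} [TopologicalSpace A]
    [TopologicalSpace B] [TopologicalSpace E] {S : Set A} {I : Set B} {h : A → B → E}
    (hS : IsCompact S) (hne : S.Nonempty)
    (hcont : ContinuousOn (fun p : A × B => h p.1 p.2) (S ×ˢ I)) :
    ∃ K : I → NonemptyCompacts E, Continuous K ∧ ∀ t, (K t : Set E) = (fun z => h z t) '' S := by
  have := hne.to_subtype
  have := isCompact_iff_compactSpace.1 hS
  have hg : Continuous (Function.uncurry fun (t : I) (z : S) => h z t) :=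
    hcont.comp_continuous (f := fun p : I × S => ((p.2 : A), (p.1 : B))) (by fun_prop)
      fun p => ⟨p.2.2, p.1.2⟩
  refine ⟨_, (continuous_const (y := (⊤ : NonemptyCompacts S))).nonemptyCompacts_map' hg,
    fun t => ?_⟩
  ext z
  simp

lemma exists_continuous_nonemptyCompacts_eq {B E : Type*} [PseudoMetricSpace B] [MetricSpace E]
    {I : Set B} {L : B → Set E} (hc : ∀ t ∈ I, IsCompact (L t)) (hne : ∀ t ∈ I, (L t).Nonempty)
    (hcont : ∀ t₀ ∈ I, ∀ ε > 0, ∃ δ > 0, ∀ t ∈ I, dist t t₀ < δ →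
      hausdorffDist (L t) (L t₀) < ε) :
    ∃ L' : I → NonemptyCompacts E, Continuous L' ∧ ∀ t, (L' t : Set E) = L t := by
  refine ⟨fun t => ⟨⟨L t, hc t t.2⟩, hne t t.2⟩, Metric.continuous_iff.2 fun t₀ ε hε => ?_,
    fun t => rfl⟩
  obtain ⟨δ, hδ, hlt⟩ := hcont t₀ t₀.2 ε hε
  exact ⟨δ, hδ, fun t ht => by rw [NonemptyCompacts.dist_eq]; exact hlt t t.2 ht⟩

end HausdorffContinuity

lemma IsArcEnds.isCompact {A : Set ℂ} {a b : ℂ} (hA : IsArcEnds A a b) : IsCompact A := by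
  obtain ⟨γ, hγ, -, rfl, -⟩ := hA
  exact isCompact_Icc.image_of_continuousOn hγ

/-- continuity of the external angle: given continuously varying arcs
`L^t` landing at `0`, the preimage `(φ^t)⁻¹(L^t \ {0})` accumulates on `∂𝔻` at a single
point `e^{iα(t)}`, `t ↦ e^{iα(t)}` is continuous, and the external ray `R^t_{α(t)}`
lands on `0`. -/
theorem continuous_angle_function
    (X : Set ℂ) (hXne : X.Nonempty) (hXcpt : IsCompact X) (hXconn : IsConnected X)
    (hXns : IsConnected Xᶜ) (h0 : (0:ℂ) ∈ frontier X) (hXb : X ⊆ Metric.ball 0 1)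
    (h : ℂ → ℝ → ℂ)
    (hcont : ContinuousOn (fun p : ℂ × ℝ => h p.1 p.2) (frontier X ×ˢ Set.Icc 0 1))
    (hinj : ∀ t ∈ Set.Icc (0:ℝ) 1, Set.InjOn (fun z => h z t) (frontier X))
    (hid : ∀ z ∈ frontier X, h z 0 = z)
    (hfix : ∀ t ∈ Set.Icc (0:ℝ) 1, h 0 t = 0)
    (hXtb : ∀ t ∈ Set.Icc (0:ℝ) 1, XtSet h X t ⊆ Metric.ball 0 1)
    (hdiam : ∀ t ∈ Set.Icc (0:ℝ) 1, Metric.diam (XtSet h X t) < 1)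
    (φ : ℝ → ℂ → ℂ)
    (hφ : ∀ t ∈ Set.Icc (0:ℝ) 1,
      IsNormalizedRiemannMap (unbddComp ((fun z => h z t) '' frontier X)) (φ t))
    (L : ℝ → Set ℂ)
    (hL : ∀ t ∈ Set.Icc (0:ℝ) 1,
      (∃ b : ℂ, IsArcEnds (L t) 0 b) ∧ L t ∩ XtSet h X t = {0})
    (hLcont : ∀ t₀ ∈ Set.Icc (0:ℝ) 1, ∀ ε > (0:ℝ), ∃ δ > (0:ℝ), ∀ t ∈ Set.Icc (0:ℝ) 1,
      |t - t₀| < δ → Metric.hausdorffDist (L t) (L t₀) < ε) :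
    ∃ α : ℝ → ℝ,
      (∀ t ∈ Set.Icc (0:ℝ) 1,
        closure ((Metric.ball 0 1 \ {0}) ∩ (φ t) ⁻¹' (L t \ {0})) ∩ Metric.sphere 0 1
          = {Complex.exp ((α t : ℂ) * Complex.I)}) ∧
      ContinuousOn (fun t : ℝ => Complex.exp ((α t : ℂ) * Complex.I)) (Set.Icc 0 1) ∧
      (∀ t ∈ Set.Icc (0:ℝ) 1,
        Filter.Tendsto (fun r : ℝ => φ t ((r : ℂ) * Complex.exp ((α t : ℂ) * Complex.I)))
          (𝓝[<] 1) (𝓝 0)) := by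
  obtain ⟨K, hK, hKeq⟩ := exists_continuous_nonemptyCompacts_eq_image
    (hXcpt.of_isClosed_subset isClosed_frontier hXcpt.isClosed.frontier_subset) ⟨0, h0⟩ hcont
  obtain ⟨L', hL', hLeq⟩ := exists_continuous_nonemptyCompacts_eq
    (fun t ht => (hL t ht).1.choose_spec.isCompact)
    (fun t ht => (singleton_nonempty (0 : ℂ)).mono ((hL t ht).2 ▸ inter_subset_left)) hLcont
  have hK0 : ∀ t, (0 : ℂ) ∈ K t := fun t => by
    rw [← SetLike.mem_coe, hKeq]
    exact ⟨0, h0, hfix t t.2⟩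
  obtain ⟨ζ, hsingle, hζ, hray⟩ := continuous_angle_function_general hK hL' hK0
    (φ := fun t => φ t) (fun t => by rw [hKeq]; exact hXtb t t.2)
    (fun t => by rw [hKeq]; exact hφ t t.2) (fun t => by rw [hLeq]; exact (hL t t.2).1)
    (fun t => by rw [hKeq, hLeq]; exact (hL t t.2).2)
  obtain ⟨α, hα⟩ : ∃ α : ℝ → ℝ, ∀ t : Icc (0 : ℝ) 1, Complex.exp (α t * Complex.I) = ζ t :=
    ⟨IccExtend zero_le_one fun s => Complex.arg (ζ s), fun t => by
      rw [IccExtend_val, ← Circle.coe_exp, Circle.exp_arg]⟩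
  refine ⟨α, fun t ht => ?_, continuousOn_iff_continuous_domRestrict.2 ?_, fun t ht => ?_⟩
  · rw [hα ⟨t, ht⟩, ← hsingle, hLeq]
  · exact (continuous_subtype_val.comp hζ).congr fun t => (hα t).symm
  · simpa only [hα ⟨t, ht⟩] using hray ⟨t, ht⟩
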